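/- arXiv:2205.09547 — 11 statements merged into one kernel-verified Lean document; each statement's English description precedes it below -/
import Mathlib

section
/- Let 1 ≤ n ≤ 4 and let w be a nonzero valid chipsplitting outcome whose positive support supp⁺(w) has exactly n + 1 elements. Then deg(w) ≤ 2n − 1, i.e., every (i,j) ∈ supp(w) satisfies i + j ≤ 2n − 1. -/
/-- The splitting-move vector at a grid point `p = (i,j)`:
`δ_{(i+1,j)} + δ_{(i,j+1)} − δ_{(i,j)}`. -/
noncomputable def splitMove (p : ℕ × ℕ) : (ℕ × ℕ) →₀ ℤ :=
  Finsupp.single (p.1 + 1, p.2) 1 + Finsupp.single (p.1, p.2 + 1) 1 - Finsupp.single p 1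

/-- A chip configuration is a chipsplitting outcome if it lies in the additive subgroup
generated by all splitting-move vectors. -/
def IsOutcome (w : (ℕ × ℕ) →₀ ℤ) : Prop :=
  w ∈ AddSubgroup.closure (Set.range splitMove)

/-- A chip configuration is valid if its negative support is contained in `{(0,0)}`. -/
def IsValid (w : (ℕ × ℕ) →₀ ℤ) : Prop :=
  ∀ p : ℕ × ℕ, w p < 0 → p = (0, 0)

/-!
Record a chipsplitting outcome by its odometer `q`, the number of moves performed at each point,
and let `D` be the last level (value of `i + j`) on which `q` does not vanish; the outcome lives on
levels up to `D + 1`. Validity makes `q` nonnegative on both axes and positive somewhere on each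
level up to `D`. Give every point the sign of `q`, where the zeros of a level receive alternating
signs on each side of one chosen positive entry.

Interleaving two consecutive levels shows that the number of sign changes along a level grows by at
most `2` for each *sink*, a point `(i + 1, j + 1)` whose sign differs from the common sign of
`(i + 1, j)` and `(i, j + 1)`. Level `0` has no sign change and level `D + 1`, where `q = 0`, has at
least `D`, so there are at least `D / 2` sinks. At a sink the terms of
`q (i, j + 1) + q (i + 1, j) - q (i + 1, j + 1)` cannot cancel, so each sink carries a chip, and so
does a point of each axis. Hence `D / 2 + 2 ≤ #supp⁺`, that is, `deg + 3 ≤ D + 4 ≤ 2 * #supp⁺`.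
-/

namespace ChipSplitting

open Finset

section Signs

/-- The number of sign changes along level `m + 1`, whose pairs of neighbours `(i + 1, j)`,
`(i, j + 1)` are indexed by the points `(i, j)` of level `m`. -/
def signChanges (s : ℕ × ℕ → Bool) (m : ℕ) : ℕ :=
  #{p ∈ antidiagonal m | s (p.1 + 1, p.2) ≠ s (p.1, p.2 + 1)}

/-- The two predecessors of `(p.1 + 1, p.2 + 1)` have the same sign and that point has the opposite
one. The sink is labelled by `p` in order to avoid subtraction on `ℕ`. -/
def IsSink (s : ℕ × ℕ → Bool) (p : ℕ × ℕ) : Prop :=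
  s (p.1 + 1, p.2) = s (p.1, p.2 + 1) ∧ s (p.1 + 1, p.2 + 1) ≠ s (p.1 + 1, p.2)

instance (s : ℕ × ℕ → Bool) : DecidablePred (IsSink s) :=
  fun _ => inferInstanceAs (Decidable (_ ∧ _))

/-- The labels below level `n` of the sinks of `s`. -/
def sinks (s : ℕ × ℕ → Bool) (n : ℕ) : Finset (ℕ × ℕ) :=
  (range n).biUnion fun m => {p ∈ antidiagonal m | IsSink s p}

variable {s : ℕ × ℕ → Bool}

lemma mem_sinks {n : ℕ} {p : ℕ × ℕ} : p ∈ sinks s n ↔ p.1 + p.2 < n ∧ IsSink s p := by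
  simp [sinks]

lemma card_sinks_succ (s : ℕ × ℕ → Bool) (n : ℕ) :
    #(sinks s (n + 1)) = #(sinks s n) + #{p ∈ antidiagonal n | IsSink s p} := by
  have hdisj : Disjoint {p ∈ antidiagonal n | IsSink s p} (sinks s n) := by
    refine disjoint_left.2 fun p hp hp' => ?_
    have hlevel := HasAntidiagonal.mem_antidiagonal.1 (mem_filter.1 hp).1
    exact (mem_sinks.1 hp').1.ne hlevel
  rw [Nat.add_comm #(sinks s n), ← card_union_of_disjoint hdisj, sinks, range_add_one,
    biUnion_insert, sinks]

/-- Insert level `m + 1` between the entries of level `m + 2`: this does not lower the number of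
sign changes, and an entry of level `m + 2` contributes two extra ones exactly if it is a sink. -/
lemma signChanges_succ_le {m : ℕ} (hx : s (m + 2, 0) = s (m + 1, 0))
    (hy : s (0, m + 2) = s (0, m + 1)) :
    signChanges s (m + 1) ≤ signChanges s m + 2 * #{p ∈ antidiagonal m | IsSink s p} := by
  let d (a b : ℕ × ℕ) : ℕ := if s a ≠ s b then 1 else 0
  have triangle (a b c : ℕ × ℕ) : d a c ≤ d a b + d b c := by grind
  have hsink (p : ℕ × ℕ) :
      d (p.1 + 1, p.2 + 1) (p.1, p.2 + 1) + d (p.1 + 1, p.2) (p.1 + 1, p.2 + 1) =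
        d (p.1 + 1, p.2) (p.1, p.2 + 1) + 2 * if IsSink s p then 1 else 0 := by
    cases ha : s (p.1 + 1, p.2) <;> cases hb : s (p.1, p.2 + 1) <;>
      cases hc : s (p.1 + 1, p.2 + 1) <;> simp [d, IsSink, ha, hb, hc]
  simp only [signChanges, card_filter]
  calc ∑ p ∈ antidiagonal (m + 1), d (p.1 + 1, p.2) (p.1, p.2 + 1)
      ≤ ∑ p ∈ antidiagonal (m + 1), (d (p.1 + 1, p.2) p + d p (p.1, p.2 + 1)) :=
        sum_le_sum fun p _ => triangle _ p _
    _ = ∑ p ∈ antidiagonal m,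
          (d (p.1 + 1, p.2 + 1) (p.1, p.2 + 1) + d (p.1 + 1, p.2) (p.1 + 1, p.2 + 1)) := by
        rw [sum_add_distrib, Nat.sum_antidiagonal_succ', Nat.sum_antidiagonal_succ,
          sum_add_distrib]
        simp [d, hx, hy]
    _ = ∑ p ∈ antidiagonal m, d (p.1 + 1, p.2) (p.1, p.2 + 1) +
          2 * ∑ p ∈ antidiagonal m, if IsSink s p then 1 else 0 := by
        rw [sum_congr rfl fun p _ => hsink p, sum_add_distrib, mul_sum]

lemma signChanges_le_two_mul_card_sinks (hx : ∀ i, s (i, 0) = s (0, 0))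
    (hy : ∀ j, s (0, j) = s (0, 0)) (n : ℕ) : signChanges s n ≤ 2 * #(sinks s n) := by
  induction n with
  | zero => simp [signChanges, filter_singleton, hx, hy]
  | succ n ih =>
    have hstep := signChanges_succ_le (m := n) ((hx _).trans (hx _).symm) ((hy _).trans (hy _).symm)
    rw [card_sinks_succ]
    omega

end Signs

section FilledSign

variable {R : Type*} [Zero R] [LinearOrder R]

open Classical in
/-- A chosen point of level `m` with a positive value of `q`, and the end point `(m, 0)` of the
level if there is none. -/
noncomputable def pivot (q : ℕ × ℕ → R) (m : ℕ) : ℕ × ℕ :=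
  if h : ∃ p : ℕ × ℕ, p.1 + p.2 = m ∧ 0 < q p then h.choose else (m, 0)

/-- Whether `p` counts as positive: the sign of `q p` if this is nonzero, and otherwise a sign which
alternates along the level of `p` on either side of the pivot, starting with a plus at both axes. -/
noncomputable def filledSign (q : ℕ × ℕ → R) (p : ℕ × ℕ) : Bool :=
  decide (0 < q p ∨ q p = 0 ∧ Even (if p.1 < (pivot q (p.1 + p.2)).1 then p.1 else p.2))

variable {q : ℕ × ℕ → R} {m : ℕ} {p : ℕ × ℕ}

lemma pivot_fst_add_snd (q : ℕ × ℕ → R) (m : ℕ) : (pivot q m).1 + (pivot q m).2 = m := by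
  unfold pivot
  split_ifs with h
  exacts [h.choose_spec.1, rfl]

lemma pivot_pos (h : ∃ p : ℕ × ℕ, p.1 + p.2 = m ∧ 0 < q p) : 0 < q (pivot q m) := by
  rw [pivot, dif_pos h]
  exact h.choose_spec.2

lemma pivot_eq (h : ¬∃ p : ℕ × ℕ, p.1 + p.2 = m ∧ 0 < q p) : pivot q m = (m, 0) :=
  dif_neg h

lemma nonneg_of_filledSign_eq_true (h : filledSign q p = true) : 0 ≤ q p := by
  rcases of_decide_eq_true h with h | h
  exacts [h.le, h.1.ge]

lemma nonpos_of_filledSign_eq_false (h : filledSign q p = false) : q p ≤ 0 :=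
  not_lt.1 fun hpos => of_decide_eq_false h (.inl hpos)

lemma filledSign_x_axis {i : ℕ} (h : 0 ≤ q (i, 0)) : filledSign q (i, 0) = true := by
  refine decide_eq_true (h.lt_or_eq.imp_right fun h0 => ⟨h0.symm, ?_⟩)
  have hle : ¬ i < (pivot q i).1 := by
    have := pivot_fst_add_snd q i
    omega
  simp [hle]

lemma filledSign_y_axis {j : ℕ} (h : 0 ≤ q (0, j)) : filledSign q (0, j) = true := by
  refine decide_eq_true (h.lt_or_eq.imp_right fun h0 => ⟨h0.symm, ?_⟩)
  have hlt : j = 0 ∨ 0 < (pivot q j).1 := by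
    by_cases hex : ∃ p : ℕ × ℕ, p.1 + p.2 = j ∧ 0 < q p
    · refine .inr (Nat.pos_of_ne_zero fun hzero => (pivot_pos hex).ne ?_)
      have := pivot_fst_add_snd q j
      rw [h0, show pivot q j = (0, j) from Prod.ext hzero (by omega)]
    · simp [pivot_eq hex, Nat.eq_zero_or_pos]
  rcases hlt with rfl | hlt
  · simp
  · simp [hlt]

lemma filledSign_ne_of_eq_zero (hx : q (p.1 + 1, p.2) = 0) (hy : q (p.1, p.2 + 1) = 0)
    (hpivot : pivot q (p.1 + p.2 + 1) ≠ (p.1 + 1, p.2)) :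
    filledSign q (p.1 + 1, p.2) ≠ filledSign q (p.1, p.2 + 1) := by
  have hside : (pivot q (p.1 + p.2 + 1)).1 ≠ p.1 + 1 := fun hfst => by
    have := pivot_fst_add_snd q (p.1 + p.2 + 1)
    exact hpivot (Prod.ext hfst (by omega))
  simp only [filledSign, hx, hy, lt_irrefl, false_or, true_and, ne_eq, decide_eq_decide,
    ← add_assoc, add_right_comm p.1 1 p.2]
  rcases hside.lt_or_gt with hlt | hgt
  · rw [if_neg (by omega), if_neg (by omega), Nat.even_add_one]
    tauto
  · rw [if_pos hgt, if_pos (by omega), Nat.even_add_one]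
    tauto

lemma le_signChanges_filledSign (h : ∀ p, p.1 + p.2 = m + 1 → q p = 0) :
    m ≤ signChanges (filledSign q) m := by
  have hpivot : pivot q (m + 1) = (m + 1, 0) := pivot_eq fun ⟨p, hp, hpos⟩ => hpos.ne' (h p hp)
  calc m = #((antidiagonal m).erase (m, 0)) := by simp
    _ ≤ signChanges (filledSign q) m := card_le_card fun p hp => ?_
  obtain ⟨hne, hmem⟩ := mem_erase.1 hp
  have hlevel := HasAntidiagonal.mem_antidiagonal.1 hmem
  refine mem_filter.2 ⟨hmem,
    filledSign_ne_of_eq_zero (h _ (by grind)) (h _ (by grind)) ?_⟩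
  rw [hlevel, hpivot]
  grind

end FilledSign

lemma exists_last_level {R : Type*} [Zero R] {q : (ℕ × ℕ) →₀ R} (hq : q ≠ 0) :
    ∃ D, (∀ p, D < p.1 + p.2 → q p = 0) ∧ ∃ p : ℕ × ℕ, p.1 + p.2 = D ∧ q p ≠ 0 := by
  obtain ⟨top, htop, hmax⟩ :=
    q.support.exists_max_image (fun p => p.1 + p.2) (Finsupp.support_nonempty_iff.2 hq)
  exact ⟨top.1 + top.2,
    fun p hp => Finsupp.notMem_support_iff.1 fun hmem => (hmax p hmem).not_gt hp,
    top, rfl, Finsupp.mem_support_iff.1 htop⟩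

section Odometer

variable {R : Type*} [AddCommGroup R]

/-- The configuration obtained from the zero configuration by performing `q p` splitting moves at
each point `p`; the function `q` is its odometer. -/
def splitOutcome (q : ℕ × ℕ → R) : ℕ × ℕ → R
  | (0, 0) => -q (0, 0)
  | (i + 1, 0) => q (i, 0) - q (i + 1, 0)
  | (0, j + 1) => q (0, j) - q (0, j + 1)
  | (i + 1, j + 1) => q (i, j + 1) + q (i + 1, j) - q (i + 1, j + 1)

lemma splitOutcome_zero : splitOutcome (0 : ℕ × ℕ → R) = 0 := by
  ext ⟨_ | i, _ | j⟩ <;> simp [splitOutcome]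

lemma splitOutcome_eq_zero_of_lt {q : ℕ × ℕ → R} {D : ℕ} (hq : ∀ p, D < p.1 + p.2 → q p = 0)
    {p : ℕ × ℕ} (hp : D + 1 < p.1 + p.2) : splitOutcome q p = 0 := by
  rcases p with ⟨_ | i, _ | j⟩ <;> simp (disch := grind) [splitOutcome, hq]

lemma exists_odometer {w : (ℕ × ℕ) →₀ ℤ} (hw : IsOutcome w) :
    ∃ q : (ℕ × ℕ) →₀ ℤ, ⇑w = splitOutcome q := by
  induction hw using AddSubgroup.closure_induction with
  | mem _ hx =>
    obtain ⟨p, rfl⟩ := hx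
    refine ⟨Finsupp.single p 1, ?_⟩
    ext ⟨_ | i, _ | j⟩ <;>
      simp only [splitMove, splitOutcome, Finsupp.sub_apply, Finsupp.add_apply,
        Finsupp.single_apply] <;> grind
  | zero => exact ⟨0, splitOutcome_zero.symm⟩
  | add x y _ _ hx hy =>
    obtain ⟨qx, hqx⟩ := hx
    obtain ⟨qy, hqy⟩ := hy
    refine ⟨qx + qy, ?_⟩
    ext ⟨_ | i, _ | j⟩ <;> simp only [Finsupp.coe_add, Pi.add_apply, hqx, hqy, splitOutcome] <;>
      ring
  | neg x _ hx =>
    obtain ⟨qx, hqx⟩ := hx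
    refine ⟨-qx, ?_⟩
    ext ⟨_ | i, _ | j⟩ <;> simp only [Finsupp.coe_neg, Pi.neg_apply, hqx, splitOutcome] <;> ring

variable [LinearOrder R] [IsOrderedAddMonoid R] {q : ℕ × ℕ → R} {D : ℕ}

lemma exists_pos_of_succ_level (hpos : ∀ p ≠ (0, 0), 0 ≤ splitOutcome q p) {m : ℕ}
    (h : ∃ p : ℕ × ℕ, p.1 + p.2 = m + 1 ∧ 0 < q p) : ∃ p : ℕ × ℕ, p.1 + p.2 = m ∧ 0 < q p := by
  by_contra! hneg
  obtain ⟨⟨_ | i, _ | j⟩, hlevel, hq⟩ := h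
  · grind
  · exact hq.not_ge ((sub_nonneg.1 (hpos (0, j + 1) (by simp))).trans (hneg _ (by grind)))
  · exact hq.not_ge ((sub_nonneg.1 (hpos (i + 1, 0) (by simp))).trans (hneg _ (by grind)))
  · refine hq.not_ge ((sub_nonneg.1 (hpos (i + 1, j + 1) (by simp))).trans ?_)
    exact add_nonpos (hneg _ (by grind)) (hneg _ (by grind))

/-- If all values on level `D` were nonpositive, a negative value at `(i, j)` would leave a negative
number of chips at `(i, j + 1)`. -/
lemma exists_pos_of_last_level (hpos : ∀ p ≠ (0, 0), 0 ≤ splitOutcome q p)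
    (hq : ∀ p, D < p.1 + p.2 → q p = 0) (h : ∃ p : ℕ × ℕ, p.1 + p.2 = D ∧ q p ≠ 0) :
    ∃ p : ℕ × ℕ, p.1 + p.2 = D ∧ 0 < q p := by
  by_contra! hneg
  obtain ⟨⟨i, j⟩, hlevel, hne⟩ := h
  have hlt : q (i, j) < 0 := (hneg _ hlevel).lt_of_ne hne
  have habove : q (i, j + 1) = 0 := hq _ (by grind)
  have hchips := hpos (i, j + 1) (by simp)
  rcases i with _ | i
  · rw [splitOutcome, habove, sub_zero] at hchips
    exact hlt.not_ge hchips
  · rw [splitOutcome, habove, sub_zero] at hchips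
    exact (add_neg_of_nonpos_of_neg (hneg (i, j + 1) (by grind)) hlt).not_ge hchips

lemma exists_pos_of_level_le (hpos : ∀ p ≠ (0, 0), 0 ≤ splitOutcome q p)
    (hq : ∀ p, D < p.1 + p.2 → q p = 0) (h : ∃ p : ℕ × ℕ, p.1 + p.2 = D ∧ q p ≠ 0) {m : ℕ}
    (hm : m ≤ D) : ∃ p : ℕ × ℕ, p.1 + p.2 = m ∧ 0 < q p := by
  induction hm using Nat.decreasingInduction with
  | self => exact exists_pos_of_last_level hpos hq h
  | of_succ m _ ih => exact exists_pos_of_succ_level hpos ih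

lemma antitone_x_axis (hpos : ∀ p ≠ (0, 0), 0 ≤ splitOutcome q p) :
    Antitone fun i => q (i, 0) :=
  antitone_nat_of_succ_le fun i => sub_nonneg.1 (hpos (i + 1, 0) (by simp))

lemma antitone_y_axis (hpos : ∀ p ≠ (0, 0), 0 ≤ splitOutcome q p) :
    Antitone fun j => q (0, j) :=
  antitone_nat_of_succ_le fun j => sub_nonneg.1 (hpos (0, j + 1) (by simp))

lemma nonneg_x_axis (hpos : ∀ p ≠ (0, 0), 0 ≤ splitOutcome q p)
    (hq : ∀ p, D < p.1 + p.2 → q p = 0) (i : ℕ) : 0 ≤ q (i, 0) :=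
  (hq (i + (D + 1), 0) (by grind)).ge.trans (antitone_x_axis hpos (i.le_add_right _))

lemma nonneg_y_axis (hpos : ∀ p ≠ (0, 0), 0 ≤ splitOutcome q p)
    (hq : ∀ p, D < p.1 + p.2 → q p = 0) (j : ℕ) : 0 ≤ q (0, j) :=
  (hq (0, j + (D + 1)) (by grind)).ge.trans (antitone_y_axis hpos (j.le_add_right _))

lemma exists_splitOutcome_pos_x_axis (hq : ∀ p, D < p.1 + p.2 → q p = 0) (h0 : 0 < q (0, 0)) :
    ∃ i, 0 < splitOutcome q (i + 1, 0) := by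
  by_contra! h
  have hmono : Monotone fun i => q (i, 0) := monotone_nat_of_le_succ fun i => sub_nonpos.1 (h i)
  exact h0.not_ge ((hmono (Nat.zero_le (D + 1))).trans (hq _ (by simp)).le)

lemma exists_splitOutcome_pos_y_axis (hq : ∀ p, D < p.1 + p.2 → q p = 0) (h0 : 0 < q (0, 0)) :
    ∃ j, 0 < splitOutcome q (0, j + 1) := by
  by_contra! h
  have hmono : Monotone fun j => q (0, j) := monotone_nat_of_le_succ fun j => sub_nonpos.1 (h j)
  exact h0.not_ge ((hmono (Nat.zero_le (D + 1))).trans (hq _ (by simp)).le)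

lemma splitOutcome_ne_zero_of_isSink {p : ℕ × ℕ}
    (hlevel : ∃ r : ℕ × ℕ, r.1 + r.2 = p.1 + p.2 + 1 ∧ 0 < q r) (hp : IsSink (filledSign q) p) :
    splitOutcome q (p.1 + 1, p.2 + 1) ≠ 0 := by
  obtain ⟨heq, hne⟩ := hp
  intro hzero
  have hsum : q (p.1, p.2 + 1) + q (p.1 + 1, p.2) = q (p.1 + 1, p.2 + 1) := sub_eq_zero.1 hzero
  have hboth : q (p.1 + 1, p.2) = 0 ∧ q (p.1, p.2 + 1) = 0 := by
    cases hs : filledSign q (p.1 + 1, p.2) with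
    | true =>
      have hx := nonneg_of_filledSign_eq_true hs
      have hy := nonneg_of_filledSign_eq_true (heq ▸ hs)
      have hxy := nonpos_of_filledSign_eq_false (by simpa [hs] using hne)
      constructor <;> grind
    | false =>
      have hx := nonpos_of_filledSign_eq_false hs
      have hy := nonpos_of_filledSign_eq_false (heq ▸ hs)
      have hxy := nonneg_of_filledSign_eq_true (by simpa [hs] using hne)
      constructor <;> grind
  refine filledSign_ne_of_eq_zero hboth.1 hboth.2 (fun hpivot => ?_) heq
  exact (hpivot ▸ pivot_pos hlevel).ne' hboth.1

lemma le_two_mul_card_sinks_filledSign (hpos : ∀ p ≠ (0, 0), 0 ≤ splitOutcome q p)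
    (hq : ∀ p, D < p.1 + p.2 → q p = 0) : D ≤ 2 * #(sinks (filledSign q) D) := by
  have hx (i : ℕ) := filledSign_x_axis (nonneg_x_axis hpos hq i)
  have hy (j : ℕ) := filledSign_y_axis (nonneg_y_axis hpos hq j)
  exact (le_signChanges_filledSign fun p hp => hq p (by omega)).trans
    (signChanges_le_two_mul_card_sinks (fun i => (hx i).trans (hx 0).symm)
      (fun j => (hy j).trans (hy 0).symm) D)

theorem add_four_le_two_mul_card (hpos : ∀ p ≠ (0, 0), 0 ≤ splitOutcome q p)
    (hq : ∀ p, D < p.1 + p.2 → q p = 0) (htop : ∃ p : ℕ × ℕ, p.1 + p.2 = D ∧ q p ≠ 0)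
    {P : Finset (ℕ × ℕ)} (hP : ∀ p, 0 < splitOutcome q p → p ∈ P) : D + 4 ≤ 2 * #P := by
  have hlevel {m : ℕ} (hm : m ≤ D) := exists_pos_of_level_le hpos hq htop hm
  have h0 : 0 < q (0, 0) := by
    obtain ⟨p, hp, hqp⟩ := hlevel D.zero_le
    rwa [show p = (0, 0) by grind] at hqp
  obtain ⟨i, hi⟩ := exists_splitOutcome_pos_x_axis hq h0
  obtain ⟨j, hj⟩ := exists_splitOutcome_pos_y_axis hq h0
  let interior := (sinks (filledSign q) D).image fun p => (p.1 + 1, p.2 + 1)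
  have hinterior : #interior = #(sinks (filledSign q) D) :=
    card_image_of_injective _ fun p r h => by grind
  have hsub : insert (0, j + 1) (insert (i + 1, 0) interior) ⊆ P := by
    simp only [insert_subset_iff, interior, image_subset_iff]
    refine ⟨hP _ hj, hP _ hi, fun p hp => hP _ ?_⟩
    obtain ⟨hpD, hsink⟩ := mem_sinks.1 hp
    exact (hpos _ (by simp)).lt_of_ne' (splitOutcome_ne_zero_of_isSink (hlevel (by omega)) hsink)
  have hcard := card_le_card hsub
  rw [card_insert_of_notMem (by simp [interior]), card_insert_of_notMem (by simp [interior]),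
    hinterior] at hcard
  have := le_two_mul_card_sinks_filledSign hpos hq
  omega

end Odometer

end ChipSplitting

open ChipSplitting in
theorem stmt_0_general (w : (ℕ × ℕ) →₀ ℤ) (hw : IsOutcome w) (hv : IsValid w) :
    ∀ p : ℕ × ℕ, w p ≠ 0 → p.1 + p.2 + 3 ≤ 2 * {p : ℕ × ℕ | 0 < w p}.ncard := by
  intro p hp
  obtain ⟨q, hwq⟩ := exists_odometer hw
  have hpos (r : ℕ × ℕ) (hr : r ≠ (0, 0)) : 0 ≤ splitOutcome q r :=
    hwq ▸ not_lt.1 fun hneg => hr (hv r hneg)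
  have hq0 : q ≠ 0 := by
    rintro rfl
    exact hp (congrFun (hwq.trans splitOutcome_zero) p)
  obtain ⟨D, hq, htop⟩ := exists_last_level hq0
  have hdeg : p.1 + p.2 ≤ D + 1 :=
    not_lt.1 fun hlt => hp (hwq ▸ splitOutcome_eq_zero_of_lt hq hlt)
  have hfin : {r : ℕ × ℕ | 0 < w r}.Finite :=
    w.support.finite_toSet.subset fun r hr => Finsupp.mem_support_iff.2 (ne_of_gt hr)
  have hcard := add_four_le_two_mul_card (P := hfin.toFinset) hpos hq htop
    fun r hr => hfin.mem_toFinset.2 (hwq ▸ hr)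
  rw [Set.ncard_eq_toFinset_card _ hfin]
  omega

theorem stmt_0 (n : ℕ) (hn1 : 1 ≤ n) (hn4 : n ≤ 4)
    (w : (ℕ × ℕ) →₀ ℤ) (hw : IsOutcome w) (hv : IsValid w) (hne : w ≠ 0)
    (hcard : {p : ℕ × ℕ | 0 < w p}.ncard = n + 1) :
    ∀ p : ℕ × ℕ, w p ≠ 0 → p.1 + p.2 ≤ 2 * n - 1 := by
  intro p hp
  have := stmt_0_general w hw hv p hp
  omega
end

section
/- Let w be a valid chipsplitting outcome whose positive support supp⁺(w) has exactly 5 elements. Then deg(w) ≤ 7, i.e., every (i,j) ∈ supp(w) satisfies i + j ≤ 7. -/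
/-!
Write `w` as a combination of splitting moves, the move at `p` being used `v p` times, and read `v`
along the antidiagonals: the rows `q₀, q₁, …` satisfy `qₖ₊₁ = (1 + X) qₖ - wₖ₊₁`, where `wₖ₊₁ ≥ 0`
is row `k + 1` of `w`. Count in each row the zeros and the adjacent pairs of opposite signs. In the
spirit of Descartes' rule of signs, multiplying by `1 + X` does not increase this number, while
lowering one entry raises it by at most `2`. It is `0` for the one-entry row `q₀`. If `qₘ` is the
last nonzero row, then `(1 + X) qₘ = wₘ₊₁` has no negative entries, so its `m + 2` entries are zeros
and `r ≥ 2` chip positions. If there are `n` chip positions other than `(0, 0)` in all, this gives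
`m + 2 ≤ 2 (n - r) + r ≤ 2 n - 2`, and `w` has degree at most `m + 1`.
-/

open Finset

/-- Multiplication of a coefficient sequence by `1 + X`, as in the rows of Pascal's triangle. -/
def pascal {R : Type*} [Add R] (q : ℕ → R) : ℕ → R
  | 0 => q 0
  | i + 1 => q i + q (i + 1)

/-- The number of sign breaks among the first `n` entries of `q`: the zeros, plus the adjacent pairs
of opposite (nonzero) signs. The pair `(n - 1, n)` is included, so a row of exactly `n` entries has
to be continued by `0`. -/
def signBreaks {R : Type*} [Ring R] [LinearOrder R] (q : ℕ → R) (n : ℕ) : ℕ :=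
  ∑ i ∈ range n, ((if q i = 0 then 1 else 0) + if q i * q (i + 1) < 0 then 1 else 0)

/-- For an array `Q` whose row `k` has the entries `Q k 0, …, Q k k`, the number of places where row
`k + 1` lies strictly below the Pascal sum of row `k`, i.e. where chips come to rest. -/
def landings {R : Type*} [Add R] [LinearOrder R] (Q : ℕ → ℕ → R) (k : ℕ) : ℕ :=
  #{i ∈ range (k + 2) | Q (k + 1) i < pascal (Q k) i}

/-- The `k`-th antidiagonal of `f`, listed by the first coordinate and continued by `0`. -/
def row {M : Type*} [Zero M] (f : ℕ × ℕ → M) (k i : ℕ) : M :=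
  if i ≤ k then f (i, k - i) else 0

theorem pascal_succ {R : Type*} [Add R] (q : ℕ → R) (i : ℕ) :
    pascal q (i + 1) = q i + q (i + 1) :=
  rfl

theorem pascal_eq_of_forall_lt_eq_zero {R : Type*} [AddZeroClass R] {q : ℕ → R} {c i : ℕ}
    (hq : ∀ j < c, q j = 0) (hi : i ≤ c) : pascal q i = q i := by
  cases i with
  | zero => rfl
  | succ i => rw [pascal_succ, hq i hi, zero_add]

theorem exists_leading_ne_zero {R : Type*} [Zero R] {q : ℕ → R} (hq : q ≠ 0) :
    ∃ c, q c ≠ 0 ∧ ∀ i < c, q i = 0 := by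
  classical
  have hex : ∃ i, q i ≠ 0 := Function.ne_iff.1 hq
  exact ⟨Nat.find hex, Nat.find_spec hex, fun i hi => not_not.1 (Nat.find_min hex hi)⟩

theorem two_le_card_pascal_ne_zero {R : Type*} [AddZeroClass R] [DecidableEq R] {q : ℕ → R} {n : ℕ}
    (hq : q ≠ 0) (hn : ∀ i, n ≤ i → q i = 0) : 2 ≤ #{i ∈ range (n + 1) | pascal q i ≠ 0} := by
  have lt_of_ne_zero {i : ℕ} (hi : q i ≠ 0) : i < n := not_le.1 fun h => hi (hn i h)
  obtain ⟨c, hc, hlt⟩ := exists_leading_ne_zero hq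
  obtain ⟨d, hcd, hd, hd'⟩ : ∃ d, c ≤ d ∧ q d ≠ 0 ∧ q (d + 1) = 0 := by
    by_contra! h
    exact Nat.le_induction hc h n (lt_of_ne_zero hc).le (hn n le_rfl)
  refine one_lt_card.2 ⟨c, ?_, d + 1, ?_, (Nat.lt_succ_of_le hcd).ne⟩
  · simpa [pascal_eq_of_forall_lt_eq_zero hlt le_rfl, hc] using (lt_of_ne_zero hc).le
  · simpa [pascal_succ, hd', hd] using lt_of_ne_zero hd

section Positivity

variable {R : Type*} [AddCommMonoid R] [LinearOrder R] [IsOrderedAddMonoid R]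

theorem exists_pos_of_pascal_pos {q : ℕ → R} {i : ℕ} (h : 0 < pascal q i) : ∃ j, 0 < q j := by
  cases i with
  | zero => exact ⟨0, h⟩
  | succ i =>
    by_contra! hq
    exact h.not_ge (add_nonpos (hq i) (hq (i + 1)))

theorem exists_pos_of_le_pascal {Q : ℕ → ℕ → R} {m : ℕ} (hle : ∀ k, Q (k + 1) ≤ pascal (Q k))
    (hm : Q m ≠ 0) (hm' : Q (m + 1) = 0) {k : ℕ} (hk : k ≤ m) : ∃ i, 0 < Q k i := by
  induction hk using Nat.decreasingInduction with
  | self =>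
    obtain ⟨c, hc, hlt⟩ := exists_leading_ne_zero hm
    have hnonneg : 0 ≤ pascal (Q m) := hm' ▸ hle m
    have hpos : 0 < pascal (Q m) c := (hnonneg c).lt_of_ne
      (by rw [pascal_eq_of_forall_lt_eq_zero hlt le_rfl]; exact hc.symm)
    exact exists_pos_of_pascal_pos hpos
  | of_succ k _ ih =>
    obtain ⟨i, hi⟩ := ih
    exact exists_pos_of_pascal_pos (hi.trans_le (hle k i))

end Positivity

section SignBreaks

variable {R : Type*} [Ring R] [LinearOrder R]

theorem le_signBreaks_add_card_pos {u : ℕ → R} (hu : 0 ≤ u) (n : ℕ) :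
    n ≤ signBreaks u n + #{i ∈ range n | 0 < u i} := by
  rw [signBreaks, card_filter, ← sum_add_distrib]
  calc n = ∑ i ∈ range n, 1 := by simp
    _ ≤ _ := sum_le_sum fun i _ => by
      have hi : 0 ≤ u i := hu i
      rcases hi.eq_or_lt with h | h
      · rw [if_pos h.symm]
        omega
      · rw [if_pos h]
        omega

variable [IsStrictOrderedRing R]

-- Here `x, a + b` are consecutive entries of `pascal q` and `a, b` those of `q`; the last summands
-- on the two sides telescope along the row.
theorem signBreak_local_le (x a b : R) :
    (if x * (a + b) < 0 then 1 else 0) +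
        ((if a + b = 0 then 1 else 0) + if b * (a + b) < 0 then 1 else 0) ≤
      (if a = 0 then 1 else 0) + (if a * b < 0 then 1 else 0) + if a * x < 0 then 1 else 0 := by
  simp only [mul_neg_iff]
  grind

theorem signBreaks_pascal_add_le {q : ℕ → R} {c n : ℕ} (hc : q c ≠ 0) (hlt : ∀ i < c, q i = 0)
    (hcn : c ≤ n) :
    signBreaks (pascal q) n +
        ((if pascal q n = 0 then 1 else 0) + if q n * pascal q n < 0 then 1 else 0) ≤
      signBreaks q n := by
  induction n, hcn using Nat.le_induction with
  | base =>
    have hagree {i : ℕ} (hi : i ≤ c) : pascal q i = q i := pascal_eq_of_forall_lt_eq_zero hlt hi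
    have heq : signBreaks (pascal q) c = signBreaks q c :=
      sum_congr rfl fun i hi => by
        rw [hagree (mem_range.1 hi).le, hagree (Nat.succ_le_of_lt (mem_range.1 hi))]
    simp [heq, hagree le_rfl, hc, mul_self_nonneg]
  | succ n _ ih =>
    have hstep := signBreak_local_le (pascal q n) (q n) (q (n + 1))
    rw [← pascal_succ] at hstep
    simp only [signBreaks, sum_range_succ] at ih ⊢
    omega

theorem signBreaks_pascal_le {q : ℕ → R} {n : ℕ} (hq : q ≠ 0) (hn : ∀ i, n ≤ i → q i = 0) :
    signBreaks (pascal q) (n + 1) ≤ signBreaks q n := by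
  obtain ⟨c, hc, hlt⟩ := exists_leading_ne_zero hq
  have hcn : c ≤ n := not_lt.1 fun h => hc (hn c h.le)
  have hnext : pascal q (n + 1) = 0 := by
    rw [pascal_succ, hn n le_rfl, hn (n + 1) n.le_succ, add_zero]
  have hlast : signBreaks (pascal q) (n + 1) =
      signBreaks (pascal q) n + if pascal q n = 0 then 1 else 0 := by
    rw [signBreaks, sum_range_succ, hnext, mul_zero, if_neg (lt_irrefl _), add_zero, signBreaks]
  have := signBreaks_pascal_add_le hc hlt hcn
  omega

-- A new zero is charged to its own position, a new pair of opposite signs to its negative entry.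
theorem signBreaks_le_add_two_mul_card {q u : ℕ → R} {n : ℕ} (hle : q ≤ u) (hn : q n = u n) :
    signBreaks q n ≤ signBreaks u n + 2 * #{i ∈ range n | q i < u i} := by
  have hlocal (i : ℕ) :
      ((if q i = 0 then 1 else 0) + if q i * q (i + 1) < 0 then 1 else 0) ≤
        ((if u i = 0 then 1 else 0) + if u i * u (i + 1) < 0 then 1 else 0) +
          ((if q i < u i then 1 else 0) + if q (i + 1) < u (i + 1) then 1 else 0) := by
    have hi := hle i
    have hi' := hle (i + 1)
    simp only [mul_neg_iff]
    grind
  have hshift : ∑ i ∈ range n, (if q (i + 1) < u (i + 1) then 1 else 0) ≤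
      ∑ i ∈ range n, if q i < u i then 1 else 0 := by
    have h := (sum_range_succ' (fun i => if q i < u i then 1 else 0) n).symm.trans
      (sum_range_succ _ n)
    rw [if_neg hn.not_lt, add_zero] at h
    exact le_of_add_le_left h.le
  calc signBreaks q n
      ≤ signBreaks u n + (∑ i ∈ range n, (if q i < u i then 1 else 0) +
          ∑ i ∈ range n, if q (i + 1) < u (i + 1) then 1 else 0) := by
        rw [signBreaks, signBreaks, ← sum_add_distrib, ← sum_add_distrib]
        exact sum_le_sum fun i _ => hlocal i
    _ ≤ signBreaks u n + 2 * #{i ∈ range n | q i < u i} := by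
        rw [card_filter]
        omega

variable {Q : ℕ → ℕ → R} {m : ℕ}

theorem signBreaks_le_two_mul_sum_landings (hQ : ∀ k i, k < i → Q k i = 0)
    (hle : ∀ k, Q (k + 1) ≤ pascal (Q k)) (hm : Q m ≠ 0) (hm' : Q (m + 1) = 0) {k : ℕ}
    (hk : k ≤ m) : signBreaks (Q k) (k + 1) ≤ 2 * ∑ j ∈ range k, landings Q j := by
  have hpos {k : ℕ} (hk : k ≤ m) : ∃ i, 0 < Q k i := exists_pos_of_le_pascal hle hm hm' hk
  induction k with
  | zero =>
    obtain ⟨i, hi⟩ := hpos hk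
    obtain rfl : i = 0 := by
      by_contra h
      exact hi.ne' (hQ 0 i (Nat.pos_of_ne_zero h))
    simp [signBreaks, hQ 0 1 one_pos, hi.ne']
  | succ k ih =>
    have hk' : k ≤ m := k.le_succ.trans hk
    have hne : Q k ≠ 0 := Function.ne_iff.2 ((hpos hk').imp fun _ hi => hi.ne')
    have hend : Q (k + 1) (k + 2) = pascal (Q k) (k + 2) := by
      rw [pascal_succ, hQ (k + 1) (k + 2) (by omega), hQ k (k + 1) (by omega),
        hQ k (k + 2) (by omega), add_zero]
    calc signBreaks (Q (k + 1)) (k + 2)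
        ≤ signBreaks (pascal (Q k)) (k + 2) + 2 * landings Q k :=
          signBreaks_le_add_two_mul_card (hle k) hend
      _ ≤ signBreaks (Q k) (k + 1) + 2 * landings Q k := by
          gcongr
          exact signBreaks_pascal_le hne (hQ k)
      _ ≤ 2 * ∑ j ∈ range (k + 1), landings Q j := by
          rw [sum_range_succ, mul_add]
          gcongr
          exact ih hk'

theorem add_four_le_two_mul_sum_landings (hQ : ∀ k i, k < i → Q k i = 0)
    (hle : ∀ k, Q (k + 1) ≤ pascal (Q k)) (hm : Q m ≠ 0) (hm' : Q (m + 1) = 0) :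
    m + 4 ≤ 2 * ∑ k ∈ range (m + 1), landings Q k := by
  have hnonneg : 0 ≤ pascal (Q m) := hm' ▸ hle m
  have htop : landings Q m = #{i ∈ range (m + 2) | 0 < pascal (Q m) i} := by
    rw [landings, hm']
    rfl
  have htwo : 2 ≤ landings Q m := by
    have hpos (i : ℕ) : 0 < pascal (Q m) i ↔ pascal (Q m) i ≠ 0 := (hnonneg i).lt_iff_ne'
    simpa only [htop, hpos] using two_le_card_pascal_ne_zero hm (hQ m)
  have hrest : m + 2 ≤ 2 * ∑ k ∈ range m, landings Q k + landings Q m :=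
    calc m + 2 ≤ signBreaks (pascal (Q m)) (m + 2) + landings Q m :=
          htop ▸ le_signBreaks_add_card_pos hnonneg (m + 2)
      _ ≤ signBreaks (Q m) (m + 1) + landings Q m := by
          gcongr
          exact signBreaks_pascal_le hm (hQ m)
      _ ≤ 2 * ∑ k ∈ range m, landings Q k + landings Q m := by
          gcongr
          exact signBreaks_le_two_mul_sum_landings hQ hle hm hm' le_rfl
  rw [sum_range_succ]
  omega

end SignBreaks

theorem row_eq_zero_of_lt {M : Type*} [Zero M] (f : ℕ × ℕ → M) {k i : ℕ} (h : k < i) :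
    row f k i = 0 :=
  if_neg h.not_ge

theorem row_add_apply {M : Type*} [Zero M] (f : ℕ × ℕ → M) (p : ℕ × ℕ) :
    row f (p.1 + p.2) p.1 = f p := by
  simp [row]

theorem sum_card_row_pos_le_ncard {M : Type*} [Zero M] [LinearOrder M] (w : (ℕ × ℕ) →₀ M) (n : ℕ) :
    ∑ k ∈ range n, #{i ∈ range (k + 2) | 0 < row w (k + 1) i} ≤ {p | 0 < w p}.ncard := by
  have hfin : {p | 0 < w p}.Finite :=
    w.support.finite_toSet.subset fun p hp => Finsupp.mem_support_iff.2 (ne_of_gt hp)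
  rw [← card_sigma, Set.ncard_eq_toFinset_card _ hfin]
  refine card_le_card_of_injOn (fun x => (x.2, x.1 + 1 - x.2)) ?_ ?_
  · rintro ⟨k, i⟩ hx
    simp only [coe_sigma, Set.mem_sigma_iff, coe_range, coe_filter, mem_range] at hx
    obtain ⟨-, hi, hpos⟩ := hx
    simpa [row, Nat.le_of_lt_succ hi] using hpos
  · rintro ⟨k, i⟩ hx ⟨l, j⟩ hy h
    simp only [coe_sigma, Set.mem_sigma_iff, coe_filter, mem_range] at hx hy
    simp only [Prod.mk.injEq] at h
    obtain rfl : i = j := h.1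
    obtain rfl : k = l := by have := hx.2.1; have := hy.2.1; omega
    rfl

theorem IsOutcome.exists_linearCombination_eq {w : (ℕ × ℕ) →₀ ℤ} (hw : IsOutcome w) :
    ∃ v, Finsupp.linearCombination ℤ splitMove v = w := by
  rw [IsOutcome, ← Submodule.span_int_eq_addSubgroupClosure,
    ← Finsupp.range_linearCombination] at hw
  exact hw

theorem row_linearCombination_add_row (v : (ℕ × ℕ) →₀ ℤ) (k : ℕ) :
    row (Finsupp.linearCombination ℤ splitMove v) (k + 1) + row v (k + 1) = pascal (row v k) := by
  ext i
  induction v using Finsupp.induction_linear with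
  | zero => cases i <;> simp [row, pascal]
  | add v v' h h' =>
    cases i <;> simp only [row, pascal, Pi.add_apply, Finsupp.coe_add, map_add] at h h' ⊢ <;>
      split_ifs at h h' ⊢ <;> linarith
  | single p a =>
    obtain ⟨x, y⟩ := p
    cases i <;>
      simp only [row, pascal, splitMove, Finsupp.linearCombination_single, Finsupp.smul_apply,
        Finsupp.sub_apply, Finsupp.add_apply, Finsupp.single_apply, Pi.add_apply, smul_eq_mul,
        Prod.mk.injEq] <;>
      grind

theorem exists_last_row_ne_zero {M : Type*} [Zero M] {v : (ℕ × ℕ) →₀ M} (hv : v ≠ 0) :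
    ∃ m, row v m ≠ 0 ∧ ∀ k, m < k → row v k = 0 := by
  obtain ⟨p, hp, hmax⟩ := v.support.exists_max_image (fun p => p.1 + p.2)
    (Finsupp.support_nonempty_iff.2 hv)
  refine ⟨p.1 + p.2, fun h => ?_, fun k hk => ?_⟩
  · exact Finsupp.mem_support_iff.1 hp ((row_add_apply v p).symm.trans (congrFun h p.1))
  · ext i
    by_contra h
    have hi : i ≤ k := not_lt.1 fun hi => h (row_eq_zero_of_lt v hi)
    have := hmax (i, k - i) (Finsupp.mem_support_iff.2 (by simpa [row, hi] using h))
    simp only at this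
    omega

theorem add_le_of_linearCombination_ne_zero {v : (ℕ × ℕ) →₀ ℤ} {m : ℕ}
    (hzero : ∀ k, m < k → row v k = 0) {p : ℕ × ℕ}
    (hp : Finsupp.linearCombination ℤ splitMove v p ≠ 0) : p.1 + p.2 ≤ m + 1 := by
  by_contra! h
  obtain ⟨k, hk⟩ : ∃ k, p.1 + p.2 = k + 1 := ⟨p.1 + p.2 - 1, by omega⟩
  have hrow := congrFun (row_linearCombination_add_row v k) p.1
  rw [hzero k (by omega), hzero (k + 1) (by omega), add_zero, ← hk, row_add_apply] at hrow
  exact hp (hrow.trans (pascal_eq_of_forall_lt_eq_zero (fun _ _ => rfl) le_rfl))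

theorem IsValid.row_succ_nonneg {w : (ℕ × ℕ) →₀ ℤ} (hw : IsValid w) (k : ℕ) :
    0 ≤ row w (k + 1) := by
  intro i
  by_contra! h
  have hi : i ≤ k + 1 := not_lt.1 fun hi => h.ne (row_eq_zero_of_lt w hi)
  have := hw (i, k + 1 - i) (by simpa [row, hi] using h)
  simp only [Prod.mk.injEq] at this
  omega

theorem stmt_2_general {w : (ℕ × ℕ) →₀ ℤ} (hw : IsOutcome w) (hv : IsValid w) {p : ℕ × ℕ}
    (hp : w p ≠ 0) : p.1 + p.2 + 3 ≤ 2 * {p : ℕ × ℕ | 0 < w p}.ncard := by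
  obtain ⟨v, rfl⟩ := hw.exists_linearCombination_eq
  set w := Finsupp.linearCombination ℤ splitMove v
  obtain ⟨m, hm, hzero⟩ : ∃ m, row v m ≠ 0 ∧ ∀ k, m < k → row v k = 0 :=
    exists_last_row_ne_zero (by rintro rfl; simp [w] at hp)
  have hrow (k : ℕ) : row w (k + 1) + row v (k + 1) = pascal (row v k) :=
    row_linearCombination_add_row v k
  have hle (k : ℕ) : row v (k + 1) ≤ pascal (row v k) :=
    hrow k ▸ le_add_of_nonneg_left (hv.row_succ_nonneg k)
  have hland (k : ℕ) : landings (row v) k = #{i ∈ range (k + 2) | 0 < row w (k + 1) i} := by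
    simp [landings, ← hrow]
  have hdeg : p.1 + p.2 ≤ m + 1 := add_le_of_linearCombination_ne_zero hzero hp
  have hcount := add_four_le_two_mul_sum_landings (fun _ _ => row_eq_zero_of_lt v) hle hm
    (hzero (m + 1) m.lt_succ_self)
  simp only [hland] at hcount
  have := sum_card_row_pos_le_ncard w (m + 1)
  omega

theorem stmt_2 (w : (ℕ × ℕ) →₀ ℤ) (hw : IsOutcome w) (hv : IsValid w)
    (hcard : {p : ℕ × ℕ | 0 < w p}.ncard = 5) :
    ∀ p : ℕ × ℕ, w p ≠ 0 → p.1 + p.2 ≤ 7 := by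
  intro p hp
  have := stmt_2_general hw hv hp
  omega
end

section
/- Let w be a nonzero valid chipsplitting outcome whose positive support supp⁺(w) has at most 3 elements. Then there is a positive integer c such that w = c·w₀, where w₀ is one of the following five configurations: (1) −δ_{(0,0)} + δ_{(1,0)} + δ_{(0,1)}; (2) −δ_{(0,0)} + δ_{(3,0)} + 3·δ_{(1,1)} + δ_{(0,3)}; (3) −δ_{(0,0)} + δ_{(2,0)} + 2·δ_{(1,1)} + δ_{(0,2)}; (4) −δ_{(0,0)} + δ_{(2,0)} + δ_{(1,1)} + δ_{(0,1)}; (5) −δ_{(0,0)} + δ_{(1,0)} + δ_{(1,1)} + δ_{(0,2)}. -/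
/-!
A function `f` on the grid with `f (i + 1, j) + f (i, j + 1) = f (i, j)` pairs to zero with every
outcome. The monomials `x ^ i * y ^ j` on the line `x + y = 1` are such functions. At `(1/2, 1/2)`
they are positive, so a nonzero outcome has negative entries; at `(0, 1)` and `(1, 0)` they are
indicators of the two axes, so a valid outcome that is negative at the origin is positive somewhere
on either axis. If the positive support has at most three elements, only one further point `(i, j)`
is left, and the pairing with `X ^ i * (1 - X) ^ j` becomes an identity
`A X ^ a + B (1 - X) ^ b + e X ^ i (1 - X) ^ j = c` in `ℤ[X]`. If `e = 0`, then
`a = b = 1`. Otherwise values and derivatives at `0` and `1` force `A = B = c` and `i = j = 1` and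
leave `(a, b) = (1, 2)`, `(2, 1)` or `a = b ≥ 2`; in the last case the value at `1/2` gives `a ≤ 3`.
-/

open Polynomial

/-- A function on the grid that every splitting move preserves: the value at a point is the sum of
the values at the two points its chip is split into. These are the linear functionals on chip
configurations that vanish on all outcomes. -/
def IsSplitHarmonic {M : Type*} [Add M] (f : ℕ × ℕ → M) : Prop :=
  ∀ i j : ℕ, f (i + 1, j) + f (i, j + 1) = f (i, j)

theorem isSplitHarmonic_pow_mul_pow {R : Type*} [CommSemiring R] {x y : R} (hxy : x + y = 1) :
    IsSplitHarmonic fun p : ℕ × ℕ ↦ x ^ p.1 * y ^ p.2 := by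
  intro i j
  calc x ^ (i + 1) * y ^ j + x ^ i * y ^ (j + 1) = x ^ i * y ^ j * (x + y) := by ring
    _ = x ^ i * y ^ j := by rw [hxy, mul_one]

namespace IsOutcome

variable {w : (ℕ × ℕ) →₀ ℤ}

theorem neg (hw : IsOutcome w) : IsOutcome (-w) :=
  neg_mem hw

theorem linearCombination_eq_zero {M : Type*} [AddCommGroup M] {f : ℕ × ℕ → M}
    (hw : IsOutcome w) (hf : IsSplitHarmonic f) : Finsupp.linearCombination ℤ f w = 0 := by
  suffices AddSubgroup.closure (Set.range splitMove) ≤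
      (Finsupp.linearCombination ℤ f).toAddMonoidHom.ker from this hw
  rw [AddSubgroup.closure_le]
  rintro _ ⟨⟨i, j⟩, rfl⟩
  simp [splitMove, hf i j]

theorem exists_pos_of_isSplitHarmonic {R : Type*} [Ring R] [LinearOrder R] [IsStrictOrderedRing R]
    {f : ℕ × ℕ → R} (hw : IsOutcome w) (hf : IsSplitHarmonic f) (hf_nonneg : ∀ p, 0 ≤ f p)
    {q : ℕ × ℕ} (hwq : w q ≠ 0) (hfq : f q ≠ 0) : ∃ p, 0 < w p ∧ 0 < f p := by
  have hsum : ∑ p ∈ w.support, (w p : R) * f p = 0 := by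
    simpa [Finsupp.linearCombination_apply, Finsupp.sum] using hw.linearCombination_eq_zero hf
  obtain ⟨p, -, hp⟩ := Finset.exists_pos_of_sum_zero_of_exists_nonzero _ hsum
    ⟨q, Finsupp.mem_support_iff.2 hwq, mul_ne_zero (Int.cast_ne_zero.2 hwq) hfq⟩
  have hfp : 0 < f p := (hf_nonneg p).lt_of_ne fun h ↦ by simp [← h] at hp
  exact ⟨p, Int.cast_pos.1 (pos_of_mul_pos_left hp hfp.le), hfp⟩

theorem exists_neg (hw : IsOutcome w) (hne : w ≠ 0) : ∃ p, w p < 0 := by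
  obtain ⟨q, hq⟩ := Finsupp.ne_iff.1 hne
  obtain ⟨p, hp, -⟩ := hw.neg.exists_pos_of_isSplitHarmonic (q := q)
    (isSplitHarmonic_pow_mul_pow (add_halves (1 : ℚ))) (fun p ↦ by positivity)
    (by simpa using hq) (by positivity)
  exact ⟨p, by simpa using hp⟩

theorem exists_pos_horizontal (hw : IsOutcome w) (h0 : w (0, 0) ≠ 0) : ∃ a, 0 < w (a, 0) := by
  obtain ⟨⟨a, k⟩, hwp, hk⟩ := hw.exists_pos_of_isSplitHarmonic
    (isSplitHarmonic_pow_mul_pow (add_zero (1 : ℤ))) (fun p ↦ by positivity) h0 (by simp)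
  obtain rfl : k = 0 := by by_contra hk0; simp [hk0] at hk
  exact ⟨a, hwp⟩

theorem exists_pos_vertical (hw : IsOutcome w) (h0 : w (0, 0) ≠ 0) : ∃ b, 0 < w (0, b) := by
  obtain ⟨⟨k, b⟩, hwp, hk⟩ := hw.exists_pos_of_isSplitHarmonic
    (isSplitHarmonic_pow_mul_pow (zero_add (1 : ℤ))) (fun p ↦ by positivity) h0 (by simp)
  obtain rfl : k = 0 := by by_contra hk0; simp [hk0] at hk
  exact ⟨b, hwp⟩

end IsOutcome

namespace IsValid

variable {w : (ℕ × ℕ) →₀ ℤ}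

theorem origin_neg (hv : IsValid w) (hw : IsOutcome w) (hne : w ≠ 0) : w (0, 0) < 0 := by
  obtain ⟨p, hp⟩ := hw.exists_neg hne
  exact hv p hp ▸ hp

theorem nonneg_of_ne_origin (hv : IsValid w) {p : ℕ × ℕ} (hp : p ≠ (0, 0)) : 0 ≤ w p :=
  not_lt.1 fun h ↦ hp (hv p h)

theorem card_support_le (hv : IsValid w) : w.support.card ≤ {p | 0 < w p}.ncard + 1 := by
  have hsub : (w.support : Set (ℕ × ℕ)) ⊆ insert (0, 0) {p | 0 < w p} := by
    intro p hp
    by_cases hp0 : p = (0, 0)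
    · exact .inl hp0
    · exact .inr ((hv.nonneg_of_ne_origin hp0).lt_of_ne' (Finsupp.mem_support_iff.1 hp))
  have hfin : {p | 0 < w p}.Finite :=
    w.support.finite_toSet.subset fun p hp ↦ Finsupp.mem_support_iff.2 (ne_of_gt hp)
  calc w.support.card = (w.support : Set (ℕ × ℕ)).ncard := (Set.ncard_coe_finset _).symm
    _ ≤ (insert (0, 0) {p | 0 < w p}).ncard := Set.ncard_le_ncard hsub (hfin.insert _)
    _ ≤ {p | 0 < w p}.ncard + 1 := Set.ncard_insert_le _ _

end IsValid

theorem exists_eq_sum_single_add_single {α M : Type*} [Nonempty α] [AddCommMonoid M] {w : α →₀ M}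
    {t : Finset α} (ht : t ⊆ w.support) (hcard : w.support.card ≤ t.card + 1) :
    ∃ s e, w = ∑ p ∈ t, Finsupp.single p (w p) + Finsupp.single s e ∧
      (e ≠ 0 → s ∉ t ∧ w s = e) := by
  classical
  set u := w.filter (· ∉ t) with hu
  have hu_card : u.support.card ≤ 1 := by
    rw [hu, Finsupp.support_filter, Finset.filter_notMem_eq_sdiff, Finset.card_sdiff_of_subset ht]
    omega
  have hfilter : w.filter (· ∈ t) = ∑ p ∈ t, Finsupp.single p (w p) := by
    ext q
    simp [Finsupp.filter_apply, Finsupp.finsetSum_apply, Finsupp.single_apply]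
  obtain ⟨s, hs⟩ := Finsupp.card_support_le_one.1 hu_card
  refine ⟨s, u s, ?_, fun he ↦ ?_⟩
  · rw [← hs, ← hfilter, hu, Finsupp.filter_add_filter_not]
  · have hst : s ∉ t := fun hst ↦ he (Finsupp.filter_apply_neg _ _ (not_not.2 hst))
    exact ⟨hst, (Finsupp.filter_apply_pos (· ∉ t) w hst).symm⟩

/-- The identity `A x ^ a + B y ^ b + e x ^ i y ^ j = c` on the line `x + y = 1`, parametrised by
`x = X` and `y = 1 - X`. It expresses that the chip configuration with entries `-c`, `A`, `B`, `e`
at `(0, 0)`, `(a, 0)`, `(0, b)`, `(i, j)` is orthogonal to all monomials on that line. -/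
def TrinomialIdentity (A B e c : ℤ) (a b i j : ℕ) : Prop :=
  C A * X ^ a + C B * (1 - X) ^ b + C e * (X ^ i * (1 - X) ^ j) = C c

namespace TrinomialIdentity

variable {A B e c : ℤ} {a b i j : ℕ}

theorem swap (h : TrinomialIdentity A B e c a b i j) : TrinomialIdentity B A e c b a j i := by
  have := congrArg (fun P : ℤ[X] ↦ P.comp (1 - X)) h
  simp only [add_comp, mul_comp, C_comp, pow_comp, sub_comp, one_comp, X_comp,
    sub_sub_cancel] at this
  rw [TrinomialIdentity, ← this]
  ring

theorem eval_zero (h : TrinomialIdentity A B e c a b i j) : A * 0 ^ a + B + e * 0 ^ i = c := by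
  simpa using congrArg (eval 0) h

theorem derivative_eval_zero (h : TrinomialIdentity A B e c a b i j) :
    (if a = 1 then A else 0) + (if i = 1 then e else 0) = B * b + if i = 0 then e * j else 0 := by
  have hderiv_pow (n : ℕ) : (n : ℤ) * 0 ^ (n - 1) = if n = 1 then 1 else 0 := by
    rcases n with _ | _ | n <;> simp
  have := congrArg (fun P ↦ eval 0 (derivative P)) h
  simp only [derivative_add, derivative_mul, derivative_C, derivative_pow, derivative_X,
    derivative_sub, derivative_one, eval_add, eval_mul, eval_sub, eval_pow, eval_C, eval_X,
    eval_one, Polynomial.eval_zero, eval_natCast, map_natCast, hderiv_pow] at this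
  simp only [zero_pow_eq, sub_zero, one_pow] at this
  split_ifs at this ⊢ <;> linarith

theorem eval_half (h : TrinomialIdentity A B e c a b i j) :
    (A * (1 / 2) ^ a + B * (1 / 2) ^ b + e * (1 / 2) ^ (i + j) : ℚ) = c := by
  have hhalf : (1 : ℚ) - 1 / 2 = 1 / 2 := by norm_num
  have := congrArg (aeval (1 / 2 : ℚ)) h
  simpa only [map_add, map_mul, map_pow, map_sub, map_one, aeval_C, aeval_X, eq_intCast,
    map_intCast, hhalf, ← pow_add] using this

theorem left_ne_zero (h : TrinomialIdentity A B e c a b i j) (hA : 0 < A) (hB : 0 < B)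
    (he : 0 < e) (ha : a ≠ 0) (hb : b ≠ 0) (hij : (i, j) ≠ (0, 0)) (hijb : (i, j) ≠ (0, b)) :
    i ≠ 0 := by
  rintro rfl
  have hj : j ≠ 0 := fun hj ↦ hij (by rw [hj])
  have hjb : j ≠ b := fun hj ↦ hijb (by rw [hj])
  have hBe : B + e = c := by simpa [ha] using h.eval_zero
  have hAc : A = c := by simpa [hb, hj] using h.swap.eval_zero
  have hderiv : (if a = 1 then A else 0) = B * b + e * j := by simpa using h.derivative_eval_zero
  have hle : B * b + e * j ≤ B + e := by
    rw [← hderiv]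
    split_ifs <;> omega
  have hb_le : B * 1 ≤ B * b := by gcongr; omega
  have hj_le : e * 1 ≤ e * j := by gcongr; omega
  have hb_eq : (b : ℤ) = 1 := mul_left_cancel₀ hB.ne' (by linarith)
  have hj_eq : (j : ℤ) = 1 := mul_left_cancel₀ he.ne' (by linarith)
  omega

theorem outer_exponents_eq_one (h : TrinomialIdentity c c e c a b i j) (hc : c ≠ 0)
    (hb : b ≠ 0) (hei : e = 0 ∨ 1 < i) : a = 1 ∧ b = 1 := by
  have hderiv : (if a = 1 then c else 0) = c * b := by
    rcases hei with rfl | hi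
    · simpa using h.derivative_eval_zero
    · simpa [hi.ne', (zero_lt_one.trans hi).ne'] using h.derivative_eval_zero
  have ha1 : a = 1 := by
    by_contra ha1
    simp [ha1, hc, hb] at hderiv
  have hb1 : b = 1 := by simpa [ha1, hc, eq_comm] using hderiv
  exact ⟨ha1, hb1⟩

theorem left_eq_one (h : TrinomialIdentity c c e c a b i j) (hc : c ≠ 0) (he : e ≠ 0)
    (hb : b ≠ 0) (hi : i ≠ 0) : i = 1 := by
  by_contra hi1
  obtain ⟨rfl, rfl⟩ := h.outer_exponents_eq_one hc hb (.inr (by omega))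
  have : (e : ℚ) * (1 / 2) ^ (i + j) = 0 := by linarith [h.eval_half]
  simp [he] at this

theorem lt_four (h : TrinomialIdentity c c (c * a) c a a 1 1) (hc : 0 < c) : a < 4 := by
  have hhalf := h.eval_half
  have hcq : (0 : ℚ) < c := by exact_mod_cast hc
  have hpow : (0 : ℚ) < c * (1 / 2) ^ a := by positivity
  push_cast at hhalf
  have : (a : ℚ) < 4 := lt_of_mul_lt_mul_left (by linarith) hcq.le
  exact_mod_cast this

theorem exponents_of_inner_eq_one (h : TrinomialIdentity c c e c a b 1 1) (hc : 0 < c)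
    (he : e ≠ 0) (ha : a ≠ 0) (hb : b ≠ 0) :
    (a = 3 ∧ b = 3 ∧ e = 3 * c) ∨ (a = 2 ∧ b = 2 ∧ e = 2 * c) ∨ (a = 2 ∧ b = 1 ∧ e = c) ∨
      (a = 1 ∧ b = 2 ∧ e = c) := by
  have hderiv_zero : (if a = 1 then c else 0) + e = c * b := by
    simpa using h.derivative_eval_zero
  have hderiv_one : (if b = 1 then c else 0) + e = c * a := by
    simpa using h.swap.derivative_eval_zero
  by_cases ha1 : a = 1 <;> by_cases hb1 : b = 1 <;>
    simp only [ha1, hb1, if_true, if_false, Nat.cast_one, mul_one, zero_add]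
      at hderiv_zero hderiv_one
  · omega
  · have : (b : ℤ) = 2 := mul_left_cancel₀ hc.ne' (by linarith)
    omega
  · have : (a : ℤ) = 2 := mul_left_cancel₀ hc.ne' (by linarith)
    omega
  · obtain rfl : a = b := by
      exact_mod_cast mul_left_cancel₀ hc.ne' (hderiv_one.symm.trans hderiv_zero)
    subst hderiv_one
    have := h.lt_four hc
    obtain rfl | rfl : a = 2 ∨ a = 3 := by omega
    all_goals simp [mul_comm]

theorem classification (h : TrinomialIdentity A B e c a b i j) (hA : 0 < A)
    (hB : 0 < B) (he : 0 ≤ e) (ha : a ≠ 0) (hb : b ≠ 0)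
    (hij : e ≠ 0 → (i, j) ≠ (0, 0) ∧ (i, j) ≠ (a, 0) ∧ (i, j) ≠ (0, b)) :
    A = c ∧ B = c ∧ ((a = 1 ∧ b = 1 ∧ e = 0) ∨ (i = 1 ∧ j = 1 ∧
      ((a = 3 ∧ b = 3 ∧ e = 3 * c) ∨ (a = 2 ∧ b = 2 ∧ e = 2 * c) ∨ (a = 2 ∧ b = 1 ∧ e = c) ∨
        (a = 1 ∧ b = 2 ∧ e = c)))) := by
  rcases he.eq_or_lt' with rfl | he
  · obtain rfl : B = c := by simpa [ha] using h.eval_zero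
    obtain rfl : A = B := by simpa [hb] using h.swap.eval_zero
    obtain ⟨ha1, hb1⟩ := h.outer_exponents_eq_one hA.ne' hb (.inl rfl)
    exact ⟨rfl, rfl, .inl ⟨ha1, hb1, rfl⟩⟩
  · obtain ⟨hij0, hija, hijb⟩ := hij he.ne'
    have hi : i ≠ 0 := h.left_ne_zero hA hB he ha hb hij0 hijb
    have hj : j ≠ 0 :=
      h.swap.left_ne_zero hB hA he hb ha (by simpa [and_comm] using hij0)
        (by simpa [and_comm] using hija)
    obtain rfl : B = c := by simpa [ha, hi] using h.eval_zero
    obtain rfl : A = B := by simpa [hb, hj] using h.swap.eval_zero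
    obtain rfl : i = 1 := h.left_eq_one hA.ne' he.ne' hb hi
    obtain rfl : j = 1 := h.swap.left_eq_one hA.ne' he.ne' ha hj
    exact ⟨rfl, rfl, .inr ⟨rfl, rfl, h.exponents_of_inner_eq_one hA he.ne' ha hb⟩⟩

end TrinomialIdentity

theorem IsOutcome.trinomialIdentity {A B e c : ℤ} {a b : ℕ} {s : ℕ × ℕ}
    (hw : IsOutcome (Finsupp.single (0, 0) (-c) + Finsupp.single (a, 0) A +
      Finsupp.single (0, b) B + Finsupp.single s e)) :
    TrinomialIdentity A B e c a b s.1 s.2 := by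
  have h := hw.linearCombination_eq_zero
    (isSplitHarmonic_pow_mul_pow (add_sub_cancel (X : ℤ[X]) 1))
  simp only [map_add, Finsupp.linearCombination_single, pow_zero, mul_one, one_mul,
    zsmul_eq_mul, Int.cast_neg] at h
  simp only [TrinomialIdentity, eq_intCast]
  linear_combination h

theorem exists_eq_axis_singles_add_single {w : (ℕ × ℕ) →₀ ℤ} (hw : IsOutcome w) (hv : IsValid w)
    (hne : w ≠ 0) (hcard : {p : ℕ × ℕ | 0 < w p}.ncard ≤ 3) :
    ∃ (A B e c : ℤ) (a b : ℕ) (s : ℕ × ℕ), 0 < A ∧ 0 < B ∧ 0 ≤ e ∧ a ≠ 0 ∧ b ≠ 0 ∧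
      (e ≠ 0 → s ≠ (0, 0) ∧ s ≠ (a, 0) ∧ s ≠ (0, b)) ∧
      w = Finsupp.single (0, 0) (-c) + Finsupp.single (a, 0) A + Finsupp.single (0, b) B +
        Finsupp.single s e := by
  have h0 := hv.origin_neg hw hne
  obtain ⟨a, hA⟩ := hw.exists_pos_horizontal h0.ne
  obtain ⟨b, hB⟩ := hw.exists_pos_vertical h0.ne
  have ha : a ≠ 0 := by rintro rfl; exact h0.not_gt hA
  have hb : b ≠ 0 := by rintro rfl; exact h0.not_gt hB
  have ht : ({(0, 0), (a, 0), (0, b)} : Finset (ℕ × ℕ)) ⊆ w.support := by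
    simp [Finset.insert_subset_iff, h0.ne, hA.ne', hB.ne']
  have ht_card : ({(0, 0), (a, 0), (0, b)} : Finset (ℕ × ℕ)).card = 3 :=
    Finset.card_eq_three.2 ⟨_, _, _, by simp [ha.symm], by simp [hb.symm], by simp [ha], rfl⟩
  obtain ⟨s, e, hwe, hs⟩ := exists_eq_sum_single_add_single ht
    (by have := hv.card_support_le; omega)
  have he : 0 ≤ e := by
    by_contra! he
    obtain ⟨hst, rfl⟩ := hs he.ne
    exact he.not_ge (hv.nonneg_of_ne_origin fun hs0 ↦ hst (by simp [hs0]))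
  refine ⟨w (a, 0), w (0, b), e, -w (0, 0), a, b, s, hA, hB, he, ha, hb, fun h ↦ ?_, ?_⟩
  · simpa using (hs h).1
  · rwa [Finset.sum_insert (by simp [ha.symm, hb.symm]), Finset.sum_pair (by simp [ha]),
      ← add_assoc, ← neg_neg (w (0, 0))] at hwe

theorem stmt_3 (w : (ℕ × ℕ) →₀ ℤ) (hw : IsOutcome w) (hv : IsValid w) (hne : w ≠ 0)
    (hcard : {p : ℕ × ℕ | 0 < w p}.ncard ≤ 3) :
    ∃ c : ℤ, 0 < c ∧
      (w = c • (-Finsupp.single (0, 0) 1 + Finsupp.single (1, 0) 1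
            + Finsupp.single (0, 1) 1 : (ℕ × ℕ) →₀ ℤ) ∨
       w = c • (-Finsupp.single (0, 0) 1 + Finsupp.single (3, 0) 1
            + Finsupp.single (1, 1) 3 + Finsupp.single (0, 3) 1 : (ℕ × ℕ) →₀ ℤ) ∨
       w = c • (-Finsupp.single (0, 0) 1 + Finsupp.single (2, 0) 1
            + Finsupp.single (1, 1) 2 + Finsupp.single (0, 2) 1 : (ℕ × ℕ) →₀ ℤ) ∨
       w = c • (-Finsupp.single (0, 0) 1 + Finsupp.single (2, 0) 1
            + Finsupp.single (1, 1) 1 + Finsupp.single (0, 1) 1 : (ℕ × ℕ) →₀ ℤ) ∨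
       w = c • (-Finsupp.single (0, 0) 1 + Finsupp.single (1, 0) 1
            + Finsupp.single (1, 1) 1 + Finsupp.single (0, 2) 1 : (ℕ × ℕ) →₀ ℤ)) := by
  obtain ⟨A, B, e, c, a, b, ⟨i, j⟩, hA, hB, he, ha, hb, hij, rfl⟩ :=
    exists_eq_axis_singles_add_single hw hv hne hcard
  obtain ⟨rfl, rfl, hcases⟩ := hw.trinomialIdentity.classification hA hB he ha hb hij
  refine ⟨_, hA, ?_⟩
  simp only [smul_add, smul_neg, Finsupp.smul_single, smul_eq_mul, mul_one, Finsupp.single_neg]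
  rcases hcases with ⟨rfl, rfl, rfl⟩ | ⟨rfl, rfl, ⟨rfl, rfl, rfl⟩ | ⟨rfl, rfl, rfl⟩ |
    ⟨rfl, rfl, rfl⟩ | ⟨rfl, rfl, rfl⟩⟩
  · left
    rw [Finsupp.single_zero, add_zero]
  · right; left
    rw [mul_comm (3 : ℤ), add_right_comm]
  · right; right; left
    rw [mul_comm (2 : ℤ), add_right_comm]
  · right; right; right; left
    rw [add_right_comm]
  · right; right; right; right
    rw [add_right_comm]
end

section
/- Let w be a chipsplitting outcome with w(i,j) ≥ 0 for all (i,j) ∈ ℕ × ℕ (i.e., supp⁻(w) = ∅). Then w = 0. -/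
/-!
Evaluating `w` as the polynomial `∑ w(i,j) xⁱ yʲ` at a point with `x + y = 1` kills every splitting
move, because a chip at `(i,j)` weighs `xⁱ yʲ = xⁱ (x + y) yʲ`, as much as its two successors
together. At `x = y = 1/2` all weights are positive, so a nonzero nonnegative configuration has
positive value and cannot be an outcome.
-/

theorem linearCombination_pos {α R M : Type*} [Semiring R] [PartialOrder R] [AddCommMonoid M]
    [PartialOrder M] [IsOrderedCancelAddMonoid M] [Module R M] [PosSMulStrictMono R M]
    {φ : α → M} {v : α →₀ R} (hφ : ∀ a, 0 < φ a) (hv : 0 < v) :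
    0 < Finsupp.linearCombination R φ v := by
  rw [Finsupp.linearCombination_apply]
  refine Finset.sum_pos (fun a ha ↦ ?_) (Finsupp.support_nonempty_iff.mpr hv.ne')
  have hva : 0 < v a := (hv.le a).lt_of_ne' (Finsupp.mem_support_iff.mp ha)
  exact smul_pos hva (hφ a)

section ChipEval

variable {R : Type*} [Ring R]

/-- The value at `(x, y)` of the polynomial `∑ w(i,j) xⁱ yʲ` attached to a chip configuration `w`,
as a linear functional of `w`. The coordinates `x` and `y` need not commute: all powers of `x`
stand to the left. -/
noncomputable def chipEval (x y : R) : ((ℕ × ℕ) →₀ ℤ) →ₗ[ℤ] R :=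
  Finsupp.linearCombination ℤ fun p ↦ x ^ p.1 * y ^ p.2

theorem chipEval_single_one (x y : R) (p : ℕ × ℕ) :
    chipEval x y (Finsupp.single p 1) = x ^ p.1 * y ^ p.2 := by
  rw [chipEval, Finsupp.linearCombination_single, one_smul]

theorem chipEval_splitMove (x y : R) (p : ℕ × ℕ) :
    chipEval x y (splitMove p) = x ^ p.1 * (x + y - 1) * y ^ p.2 := by
  simp only [splitMove, map_sub, map_add, chipEval_single_one]
  rw [pow_succ x, pow_succ' y]
  noncomm_ring

theorem IsOutcome.chipEval_eq_zero {w : (ℕ × ℕ) →₀ ℤ} (hw : IsOutcome w) {x y : R}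
    (hxy : x + y = 1) : chipEval x y w = 0 := by
  have closure_le_ker :
      AddSubgroup.closure (Set.range splitMove) ≤ (chipEval x y).toAddMonoidHom.ker := by
    rw [AddSubgroup.closure_le]
    rintro _ ⟨p, rfl⟩
    change chipEval x y (splitMove p) = 0
    rw [chipEval_splitMove, hxy, sub_self, mul_zero, zero_mul]
  exact closure_le_ker hw

theorem chipEval_pos [PartialOrder R] [IsStrictOrderedRing R] {x y : R} (hx : 0 < x) (hy : 0 < y)
    {w : (ℕ × ℕ) →₀ ℤ} (hw : 0 < w) : 0 < chipEval x y w :=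
  linearCombination_pos (fun p ↦ mul_pos (pow_pos hx p.1) (pow_pos hy p.2)) hw

end ChipEval

theorem stmt_6 (w : (ℕ × ℕ) →₀ ℤ) (hw : IsOutcome w)
    (hpos : ∀ p : ℕ × ℕ, 0 ≤ w p) :
    w = 0 := by
  by_contra hne
  have w_pos : 0 < w := lt_of_le_of_ne' hpos hne
  have eval_pos : 0 < chipEval (1 / 2 : ℚ) (1 / 2) w := chipEval_pos one_half_pos one_half_pos w_pos
  exact eval_pos.ne' (hw.chipEval_eq_zero (add_halves 1))
end

section
/- A chip configuration w : ℕ × ℕ → ℤ is a chipsplitting outcome if and only if the polynomial ∑_{(i,j)} w(i,j)·X^i·(1−X)^j equals 0 in ℤ[X] (the sum ranging over the finite support of w). -/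
/-!
Splitting at `(i, j)` reflects `X + (1 - X) = 1`, so every splitting move evaluates to zero.
Conversely, the move at `(i, j)` trades a chip at `(i, j + 1)` for one at `(i, j)` minus one at
`(i + 1, j)`. Repeating this pushes a configuration into the row `j = 0`, where it is the list of
coefficients of its polynomial; if the polynomial vanishes, only splitting moves remain.
-/

section

open Polynomial

variable (R : Type*) [Ring R]

/-- The splitting-move vector at `p` for configurations with coefficients in `R`; for `R = ℤ` it is
definitionally `splitMove p`. -/
noncomputable def ringSplitMove (p : ℕ × ℕ) : (ℕ × ℕ) →₀ R :=
  Finsupp.single (p.1 + 1, p.2) 1 + Finsupp.single (p.1, p.2 + 1) 1 - Finsupp.single p 1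

/-- The polynomial of a chip configuration, in which a chip at `(i, j)` counts as
`X ^ i * (1 - X) ^ j`. -/
noncomputable def chipPolynomial : ((ℕ × ℕ) →₀ R) →ₗ[R] R[X] :=
  Finsupp.linearCombination R fun p ↦ X ^ p.1 * (1 - X) ^ p.2

/-- The chip configuration supported on the row `j = 0` with the coefficients of a given
polynomial. -/
noncomputable def bottomRow : R[X] →ₗ[R] ((ℕ × ℕ) →₀ R) :=
  Polynomial.lsum fun i ↦ Finsupp.lsingle (i, 0)

variable {R}

theorem chipPolynomial_apply (w : (ℕ × ℕ) →₀ R) :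
    chipPolynomial R w = ∑ p ∈ w.support, C (w p) * X ^ p.1 * (1 - X) ^ p.2 := by
  simp only [chipPolynomial, Finsupp.linearCombination_apply, Finsupp.sum, smul_eq_C_mul, mul_assoc]

theorem bottomRow_X_pow (i : ℕ) :
    bottomRow R (X ^ i) = Finsupp.single (i, 0) 1 := by
  simp [bottomRow, ← monomial_one_right_eq_X_pow, sum_monomial_index]

theorem pow_succ_mul_one_sub_pow_add (a : R) (i j : ℕ) :
    a ^ (i + 1) * (1 - a) ^ j + a ^ i * (1 - a) ^ (j + 1) = a ^ i * (1 - a) ^ j := by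
  rw [pow_succ, pow_succ' (1 - a)]
  noncomm_ring

theorem chipPolynomial_ringSplitMove (p : ℕ × ℕ) : chipPolynomial R (ringSplitMove R p) = 0 := by
  simp only [chipPolynomial, ringSplitMove, map_sub, map_add, Finsupp.linearCombination_single,
    one_smul, pow_succ_mul_one_sub_pow_add, sub_self]

theorem single_sub_bottomRow_mem_span (i j : ℕ) :
    Finsupp.single (i, j) 1 - bottomRow R (X ^ i * (1 - X) ^ j) ∈
      Submodule.span R (Set.range (ringSplitMove R)) := by
  induction j generalizing i with
  | zero => simp [bottomRow_X_pow]
  | succ j ih =>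
    have move_mem : ringSplitMove R (i, j) ∈ Submodule.span R (Set.range (ringSplitMove R)) :=
      Submodule.subset_span ⟨(i, j), rfl⟩
    convert add_mem move_mem (sub_mem (ih i) (ih (i + 1))) using 1
    rw [← pow_succ_mul_one_sub_pow_add X i j, map_add, ringSplitMove]
    abel

theorem sub_bottomRow_chipPolynomial_mem_span (w : (ℕ × ℕ) →₀ R) :
    w - bottomRow R (chipPolynomial R w) ∈ Submodule.span R (Set.range (ringSplitMove R)) := by
  induction w using Finsupp.induction_linear with
  | zero => simp
  | add v w hv hw =>
    rw [map_add, map_add, add_sub_add_comm]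
    exact add_mem hv hw
  | single p a =>
    rw [chipPolynomial, Finsupp.linearCombination_single, map_smul, ← Finsupp.smul_single_one,
      ← smul_sub]
    exact Submodule.smul_mem _ a (single_sub_bottomRow_mem_span p.1 p.2)

variable (R) in
theorem ker_chipPolynomial :
    LinearMap.ker (chipPolynomial R) = Submodule.span R (Set.range (ringSplitMove R)) := by
  apply le_antisymm
  · intro w hw
    simpa only [LinearMap.mem_ker.mp hw, map_zero, sub_zero] using
      sub_bottomRow_chipPolynomial_mem_span w
  · rw [Submodule.span_le, Set.range_subset_iff]
    exact chipPolynomial_ringSplitMove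

theorem stmt_7_general (w : (ℕ × ℕ) →₀ R) :
    w ∈ Submodule.span R (Set.range (ringSplitMove R)) ↔
      ∑ p ∈ w.support, C (w p) * X ^ p.1 * (1 - X) ^ p.2 = (0 : R[X]) := by
  rw [← ker_chipPolynomial, LinearMap.mem_ker, chipPolynomial_apply]

end

open Polynomial in
theorem stmt_7 (w : (ℕ × ℕ) →₀ ℤ) :
    IsOutcome w ↔
      ∑ p ∈ w.support, C (w p) * X ^ p.1 * (1 - X) ^ p.2 = (0 : ℤ[X]) := by
  rw [IsOutcome, ← Submodule.span_int_eq_addSubgroupClosure]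
  exact stmt_7_general w
end

section
/- Let d ∈ ℕ and let w be a chip configuration with supp(w) ⊆ V_d. Then w is a chipsplitting outcome if and only if for every Pascal coefficient system c on V_d one has ∑_{(i,j) ∈ V_d} c(i,j)·w(i,j) = 0. -/
/-- A Pascal coefficient system on `V_d = {(i,j) : i + j ≤ d}`:
`c(i,j) = c(i+1,j) + c(i,j+1)` whenever `i + j ≤ d − 1`. -/
def IsPascal (d : ℕ) (c : ℕ × ℕ → ℤ) : Prop :=
  ∀ i j : ℕ, i + j + 1 ≤ d → c (i, j) = c (i + 1, j) + c (i, j + 1)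

/-! Send a chip at `(i, j)` to the polynomial `(1 - X) ^ i * X ^ j`. Since `(1 - X) + X = 1`,
splitting moves are sent to zero; conversely, modulo splitting moves every configuration can be
pushed into the column `i = 0`, where the chips become the monomials `X ^ j`. Hence the outcomes are
exactly the kernel of this map, and Pascal systems are the additive functionals on its target
`ℤ[X]`: the coefficient functionals detect the kernel, and a Pascal system on `V_d` extends to the
whole quadrant because it is determined by its values on the column `i = 0`. -/

/-- A Pascal system without degree bound. Its values may lie in any additive structure, so that
`ℤ[X]`-valued systems are covered as well. -/
def IsGlobalPascal {A : Type*} [Add A] (c : ℕ × ℕ → A) : Prop :=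
  ∀ i j : ℕ, c (i, j) = c (i + 1, j) + c (i, j + 1)

lemma IsGlobalPascal.map {A B : Type*} [Add A] [Add B] {c : ℕ × ℕ → A} (hc : IsGlobalPascal c)
    (f : A →ₙ+ B) : IsGlobalPascal fun p => f (c p) := fun i j => by
  simp only [hc i j, map_add]

lemma IsGlobalPascal.isPascal {c : ℕ × ℕ → ℤ} (hc : IsGlobalPascal c) (d : ℕ) : IsPascal d c :=
  fun i j _ => hc i j

section LinearCombination

variable {A : Type*} [AddCommGroup A] {c : ℕ × ℕ → A}

lemma IsGlobalPascal.linearCombination_splitMove (hc : IsGlobalPascal c) (p : ℕ × ℕ) :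
    Finsupp.linearCombination ℤ c (splitMove p) = 0 := by
  simp [splitMove, hc p.1 p.2]

lemma IsOutcome.linearCombination_eq_zero_s8 {w : (ℕ × ℕ) →₀ ℤ} (hw : IsOutcome w)
    (hc : IsGlobalPascal c) : Finsupp.linearCombination ℤ c w = 0 := by
  have closure_le : AddSubgroup.closure (Set.range splitMove) ≤
      (Finsupp.linearCombination ℤ c).toAddMonoidHom.ker := by
    rw [AddSubgroup.closure_le]
    rintro _ ⟨p, rfl⟩
    exact hc.linearCombination_splitMove p
  exact closure_le hw

end LinearCombination

section PascalPolynomial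

open Polynomial

/-- The polynomial attached to a chip at `p`. These form the universal global Pascal system: every
other one arises from it by applying an additive map out of `ℤ[X]`. -/
noncomputable def pascalPolynomial (p : ℕ × ℕ) : ℤ[X] :=
  (1 - X) ^ p.1 * X ^ p.2

lemma pascalPolynomial_zero_left (j : ℕ) : pascalPolynomial (0, j) = X ^ j := by
  simp [pascalPolynomial]

lemma isGlobalPascal_pascalPolynomial : IsGlobalPascal pascalPolynomial := fun i j => by
  simp only [pascalPolynomial]
  ring

/-- The configuration in the column `i = 0` whose number of chips at `(0, j)` is the coefficient of
`X ^ j`. -/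
noncomputable def columnConfig : ℤ[X] →ₗ[ℤ] (ℕ × ℕ) →₀ ℤ :=
  Polynomial.lsum fun j => Finsupp.lsingle (0, j)

lemma columnConfig_X_pow (j : ℕ) : columnConfig (X ^ j) = Finsupp.single (0, j) 1 := by
  simp [columnConfig, X_pow_eq_monomial, sum_monomial_index]

lemma isOutcome_single_sub_columnConfig (i j : ℕ) :
    IsOutcome (Finsupp.single (i, j) 1 - columnConfig (pascalPolynomial (i, j))) := by
  induction i generalizing j with
  | zero =>
    rw [pascalPolynomial_zero_left, columnConfig_X_pow, sub_self]
    exact zero_mem _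
  | succ i ih =>
    have hmove : IsOutcome (splitMove (i, j)) := AddSubgroup.subset_closure ⟨_, rfl⟩
    have hdecomp : Finsupp.single (i + 1, j) 1 - columnConfig (pascalPolynomial (i + 1, j)) =
        splitMove (i, j) + ((Finsupp.single (i, j) 1 - columnConfig (pascalPolynomial (i, j))) -
          (Finsupp.single (i, j + 1) 1 - columnConfig (pascalPolynomial (i, j + 1)))) := by
      rw [isGlobalPascal_pascalPolynomial i j, map_add, splitMove]
      abel
    rw [hdecomp]
    exact add_mem hmove (sub_mem (ih j) (ih (j + 1)))

lemma isOutcome_sub_columnConfig (w : (ℕ × ℕ) →₀ ℤ) :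
    IsOutcome (w - columnConfig (Finsupp.linearCombination ℤ pascalPolynomial w)) := by
  induction w using Finsupp.induction_linear with
  | zero =>
    rw [map_zero, map_zero, sub_zero]
    exact zero_mem _
  | add v w hv hw =>
    rw [map_add, map_add, add_sub_add_comm]
    exact add_mem hv hw
  | single p n =>
    rw [Finsupp.linearCombination_single, map_smul, ← Finsupp.smul_single_one, ← smul_sub]
    exact zsmul_mem (isOutcome_single_sub_columnConfig p.1 p.2) n

theorem isOutcome_iff_linearCombination_pascalPolynomial_eq_zero (w : (ℕ × ℕ) →₀ ℤ) :
    IsOutcome w ↔ Finsupp.linearCombination ℤ pascalPolynomial w = 0 := by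
  refine ⟨fun hw => hw.linearCombination_eq_zero_s8 isGlobalPascal_pascalPolynomial, fun h => ?_⟩
  simpa [h] using isOutcome_sub_columnConfig w

lemma exists_isGlobalPascal_column_eq {A : Type*} [AddCommGroup A] (f : ℕ → A) :
    ∃ c : ℕ × ℕ → A, IsGlobalPascal c ∧ ∀ j, c (0, j) = f j := by
  let functional : ℤ[X] →ₗ[ℤ] A := Polynomial.lsum fun j => LinearMap.toSpanSingleton ℤ A (f j)
  refine ⟨fun p => functional (pascalPolynomial p),
    isGlobalPascal_pascalPolynomial.map functional.toAddHom, fun j => ?_⟩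
  simp [functional, pascalPolynomial_zero_left, X_pow_eq_monomial, sum_monomial_index]

end PascalPolynomial

lemma IsPascal.eq_of_column_eq {d : ℕ} {c c' : ℕ × ℕ → ℤ} (hc : IsPascal d c)
    (hc' : IsPascal d c') (hcol : ∀ j ≤ d, c (0, j) = c' (0, j)) {i j : ℕ} (hij : i + j ≤ d) :
    c (i, j) = c' (i, j) := by
  induction i generalizing j with
  | zero => exact hcol j (by omega)
  | succ i ih =>
    have hleft : c (i, j) = c' (i, j) := ih (by omega)
    have hdiag : c (i, j + 1) = c' (i, j + 1) := ih (by omega)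
    linarith [hc i j (by omega), hc' i j (by omega)]

lemma IsPascal.exists_isGlobalPascal {d : ℕ} {c : ℕ × ℕ → ℤ} (hc : IsPascal d c) :
    ∃ c' : ℕ × ℕ → ℤ, IsGlobalPascal c' ∧ ∀ p : ℕ × ℕ, p.1 + p.2 ≤ d → c p = c' p := by
  obtain ⟨c', hc', hcol⟩ := exists_isGlobalPascal_column_eq fun j => c (0, j)
  exact ⟨c', hc', fun p hp => hc.eq_of_column_eq (hc'.isPascal d) (fun j _ => (hcol j).symm) hp⟩

lemma sum_triangle_mul_eq_linearCombination {d : ℕ} {w : (ℕ × ℕ) →₀ ℤ}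
    (hsupp : ∀ p : ℕ × ℕ, w p ≠ 0 → p.1 + p.2 ≤ d) (c : ℕ × ℕ → ℤ) :
    ∑ p ∈ (Finset.range (d + 1) ×ˢ Finset.range (d + 1)).filter (fun p => p.1 + p.2 ≤ d),
      c p * w p = Finsupp.linearCombination ℤ c w := by
  have hsub : w.support ⊆ (Finset.range (d + 1) ×ˢ Finset.range (d + 1)).filter
      (fun p => p.1 + p.2 ≤ d) := fun p hp => by
    have := hsupp p (Finsupp.mem_support_iff.1 hp)
    simp only [Finset.mem_filter, Finset.mem_product, Finset.mem_range]
    omega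
  rw [Finsupp.linearCombination_apply, Finsupp.sum_of_support_subset _ hsub _ (by simp)]
  simp only [smul_eq_mul, mul_comm]

theorem stmt_8 (d : ℕ) (w : (ℕ × ℕ) →₀ ℤ)
    (hsupp : ∀ p : ℕ × ℕ, w p ≠ 0 → p.1 + p.2 ≤ d) :
    IsOutcome w ↔
      ∀ c : ℕ × ℕ → ℤ, IsPascal d c →
        ∑ p ∈ (Finset.range (d + 1) ×ˢ Finset.range (d + 1)).filter
            (fun p => p.1 + p.2 ≤ d), c p * w p = 0 := by
  constructor
  · intro hw c hc
    obtain ⟨c', hc', heq⟩ := hc.exists_isGlobalPascal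
    calc
      _ = ∑ p ∈ (Finset.range (d + 1) ×ˢ Finset.range (d + 1)).filter
            (fun p => p.1 + p.2 ≤ d), c' p * w p :=
        Finset.sum_congr rfl fun p hp => by rw [heq p (Finset.mem_filter.1 hp).2]
      _ = Finsupp.linearCombination ℤ c' w := sum_triangle_mul_eq_linearCombination hsupp c'
      _ = 0 := hw.linearCombination_eq_zero_s8 hc'
  · intro h
    rw [isOutcome_iff_linearCombination_pascalPolynomial_eq_zero]
    ext k
    have hcoeff : IsGlobalPascal fun p => (pascalPolynomial p).coeff k :=
      isGlobalPascal_pascalPolynomial.map (Polynomial.lcoeff ℤ k).toAddHom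
    calc
      _ = Finsupp.linearCombination ℤ (fun p => (pascalPolynomial p).coeff k) w :=
        Finsupp.apply_linearCombination ℤ (Polynomial.lcoeff ℤ k) pascalPolynomial w
      _ = 0 := by
        rw [← sum_triangle_mul_eq_linearCombination hsupp]
        exact h _ (hcoeff.isPascal d)
end

section
/- Let d ∈ ℕ and let w be a chipsplitting outcome with supp(w) ⊆ V_d. Define the chip configuration w' by w'(i,j) := (−1)^{d−j}·w(j, d − i − j) for (i,j) ∈ V_d and w'(i,j) := 0 otherwise. Then w' is a chipsplitting outcome. -/
/-!
The map `w ↦ w'` sends the splitting move at `(i, j)` to `±` a splitting move as long as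
`i + j < d`, so it suffices to generate an outcome supported in `V_d` by such moves. Applying the
move at `(i, j)` whenever there is a chip at `(i, j + 1)` pushes every chip of `V_d` onto the axis
`j = 0`, and only uses moves with `i + j < d`. What remains on the axis is the list of coefficients
of `∑ w(i, j) X ^ i (1 - X) ^ j`, which is zero because every splitting move vanishes on the line
`x + y = 1`.
-/

open scoped Polynomial

open Polynomial (X)

/-- The subgroup generated by the splitting moves which stay inside the triangle
`V_d = {(i, j) | i + j ≤ d}`. -/
noncomputable def boundedOutcomes (d : ℕ) : AddSubgroup ((ℕ × ℕ) →₀ ℤ) :=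
  AddSubgroup.closure (splitMove '' {p | p.1 + p.2 < d})

/-- The restriction of the polynomial `∑ w(i, j) x ^ i y ^ j` to the line `x + y = 1`,
parametrised by `x`. -/
noncomputable def lineRestriction : ((ℕ × ℕ) →₀ ℤ) →ₗ[ℤ] ℤ[X] :=
  Finsupp.linearCombination ℤ fun p ↦ X ^ p.1 * (1 - X) ^ p.2

/-- The chip configuration on the axis `j = 0` whose value at `(n, 0)` is the coefficient of
`X ^ n`; a section of `lineRestriction`. -/
noncomputable def axisConfig : ℤ[X] →ₗ[ℤ] ((ℕ × ℕ) →₀ ℤ) :=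
  (Polynomial.basisMonomials ℤ).constr ℤ fun n ↦ Finsupp.single (n, 0) 1

theorem splitMove_mem_boundedOutcomes {d : ℕ} {p : ℕ × ℕ} (hp : p.1 + p.2 < d) :
    splitMove p ∈ boundedOutcomes d :=
  AddSubgroup.subset_closure ⟨p, hp, rfl⟩

theorem lineRestriction_single (p : ℕ × ℕ) (c : ℤ) :
    lineRestriction (Finsupp.single p c) = c • (X ^ p.1 * (1 - X) ^ p.2) :=
  Finsupp.linearCombination_single ..

theorem lineRestriction_splitMove (p : ℕ × ℕ) : lineRestriction (splitMove p) = 0 := by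
  simp only [splitMove, map_add, map_sub, lineRestriction_single, one_smul]
  ring

theorem IsOutcome.lineRestriction_eq_zero {w : (ℕ × ℕ) →₀ ℤ} (hw : IsOutcome w) :
    lineRestriction w = 0 := by
  have closure_le_ker :
      AddSubgroup.closure (Set.range splitMove) ≤ lineRestriction.toAddMonoidHom.ker := by
    rw [AddSubgroup.closure_le]
    rintro _ ⟨p, rfl⟩
    exact lineRestriction_splitMove p
  exact closure_le_ker hw

theorem axisConfig_X_pow (n : ℕ) : axisConfig (X ^ n) = Finsupp.single (n, 0) 1 := by
  rw [← Polynomial.monomial_one_right_eq_X_pow]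
  simpa only [axisConfig, Polynomial.coe_basisMonomials] using
    (Polynomial.basisMonomials ℤ).constr_basis ℤ (fun n ↦ Finsupp.single (n, 0) (1 : ℤ)) n

theorem single_sub_axisConfig_mem_boundedOutcomes {d i j : ℕ} (h : i + j ≤ d) :
    Finsupp.single (i, j) 1 - axisConfig (X ^ i * (1 - X) ^ j) ∈ boundedOutcomes d := by
  induction j generalizing i with
  | zero => simp only [pow_zero, mul_one, axisConfig_X_pow, sub_self, zero_mem]
  | succ j ih =>
    have hmove : splitMove (i, j) ∈ boundedOutcomes d :=
      splitMove_mem_boundedOutcomes (Nat.lt_of_succ_le h)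
    have hpoly : (X ^ i * (1 - X) ^ (j + 1) : ℤ[X]) =
        X ^ i * (1 - X) ^ j - X ^ (i + 1) * (1 - X) ^ j := by ring
    convert add_mem hmove (sub_mem (ih (i := i) (by lia)) (ih (i := i + 1) (by lia))) using 1
    rw [hpoly, map_sub, splitMove]
    abel

theorem sub_axisConfig_lineRestriction_mem_boundedOutcomes {d : ℕ} {w : (ℕ × ℕ) →₀ ℤ}
    (hsupp : ∀ p, w p ≠ 0 → p.1 + p.2 ≤ d) :
    w - axisConfig (lineRestriction w) ∈ boundedOutcomes d := by
  have hsum : w - axisConfig (lineRestriction w) =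
      ∑ p ∈ w.support, w p • (Finsupp.single p 1 - axisConfig (X ^ p.1 * (1 - X) ^ p.2)) := by
    simp only [smul_sub, Finset.sum_sub_distrib, ← map_smul, ← map_sum, Finsupp.smul_single_one]
    congr 1
    exact w.sum_single.symm
  rw [hsum]
  exact sum_mem fun p hp ↦ zsmul_mem
    (single_sub_axisConfig_mem_boundedOutcomes (hsupp p (Finsupp.mem_support_iff.mp hp))) _

theorem IsOutcome.mem_boundedOutcomes {d : ℕ} {w : (ℕ × ℕ) →₀ ℤ} (hw : IsOutcome w)
    (hsupp : ∀ p, w p ≠ 0 → p.1 + p.2 ≤ d) : w ∈ boundedOutcomes d := by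
  simpa only [hw.lineRestriction_eq_zero, map_zero, sub_zero] using
    sub_axisConfig_lineRestriction_mem_boundedOutcomes hsupp

/-- The signed rotation `w ↦ w'` of the triangle `V_d`: writing a point of `V_d` as `(i, j, k)`
with `i + j + k = d`, it moves the chips at `(i, j, k)` to `(k, i, j)` with the sign
`(-1) ^ (d - i)`. Chips outside `V_d` are discarded. -/
noncomputable def rotate (d : ℕ) : ((ℕ × ℕ) →₀ ℤ) →ₗ[ℤ] ((ℕ × ℕ) →₀ ℤ) :=
  Finsupp.linearCombination ℤ fun p ↦
    if p.1 + p.2 ≤ d then Finsupp.single (d - p.1 - p.2, p.1) ((-1) ^ (d - p.1)) else 0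

theorem rotate_single {d i j k : ℕ} (h : i + j + k = d) (c : ℤ) :
    rotate d (Finsupp.single (i, j) c) = Finsupp.single (k, i) ((-1) ^ (j + k) * c) := by
  obtain ⟨hij, hk, hjk⟩ : i + j ≤ d ∧ d - i - j = k ∧ d - i = j + k := by lia
  rw [rotate, Finsupp.linearCombination_single, if_pos hij, hk, hjk, Finsupp.smul_single,
    smul_eq_mul, mul_comm]

theorem rotate_single_of_lt {d : ℕ} {p : ℕ × ℕ} (hp : d < p.1 + p.2) (c : ℤ) :
    rotate d (Finsupp.single p c) = 0 := by
  rw [rotate, Finsupp.linearCombination_single, if_neg hp.not_ge, smul_zero]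

theorem rotate_apply (d : ℕ) (w : (ℕ × ℕ) →₀ ℤ) (p : ℕ × ℕ) :
    rotate d w p =
      if p.1 + p.2 ≤ d then (-1) ^ (d - p.2) * w (p.2, d - p.1 - p.2) else 0 := by
  induction w using Finsupp.induction_linear with
  | zero => simp only [map_zero, Finsupp.zero_apply, mul_zero, ite_self]
  | add v w hv hw =>
    simp only [map_add, Finsupp.add_apply, hv, hw, mul_add]
    split_ifs <;> simp only [add_zero]
  | single q c =>
    obtain ⟨i, j⟩ := p
    obtain ⟨a, b⟩ := q
    by_cases hq : a + b ≤ d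
    · obtain ⟨k, rfl⟩ := Nat.exists_eq_add_of_le hq
      have position_iff :
          (k, a) = (i, j) ↔ i + j ≤ a + b + k ∧ (a, b) = (j, a + b + k - i - j) := by
        simp only [Prod.mk.injEq]
        lia
      rw [rotate_single rfl]
      have sign_eq (hj : a = j) : a + b + k - j = b + k := by lia
      simp only [Finsupp.single_apply, position_iff, ite_and]
      split_ifs with _ hpos
      · rw [sign_eq (Prod.mk.inj hpos).1]
      · rw [mul_zero]
      · rfl
    · have hne : i + j ≤ d → (a, b) ≠ (j, d - i - j) := by
        simp only [ne_eq, Prod.mk.injEq]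
        lia
      rw [rotate_single_of_lt (not_le.mp hq), Finsupp.zero_apply]
      split_ifs with hp
      · rw [Finsupp.single_eq_of_ne' (hne hp), mul_zero]
      · rfl

theorem rotate_splitMove {d i j k : ℕ} (h : i + j + k + 1 = d) :
    rotate d (splitMove (i, j)) = (-1 : ℤ) ^ (j + k) • splitMove (k, i) := by
  have hright : rotate d (Finsupp.single (i + 1, j) 1) =
      Finsupp.single (k, i + 1) ((-1) ^ (j + k)) := by
    rw [rotate_single (k := k) (by lia), mul_one]
  have hup : rotate d (Finsupp.single (i, j + 1) 1) = -Finsupp.single (k, i) ((-1) ^ (j + k)) := by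
    rw [rotate_single (k := k) (by lia), ← Finsupp.single_neg]
    ring_nf
  have hsource : rotate d (Finsupp.single (i, j) 1) =
      -Finsupp.single (k + 1, i) ((-1) ^ (j + k)) := by
    rw [rotate_single (k := k + 1) (by lia), ← Finsupp.single_neg]
    ring_nf
  simp only [splitMove, map_add, map_sub, hright, hup, hsource, smul_add, smul_sub,
    Finsupp.smul_single, smul_eq_mul, mul_one]
  abel

theorem isOutcome_rotate {d : ℕ} {w : (ℕ × ℕ) →₀ ℤ} (hw : w ∈ boundedOutcomes d) :
    IsOutcome (rotate d w) := by
  have le_comap : boundedOutcomes d ≤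
      (AddSubgroup.closure (Set.range splitMove)).comap (rotate d).toAddMonoidHom := by
    rw [boundedOutcomes, AddSubgroup.closure_le]
    rintro _ ⟨⟨i, j⟩, hij, rfl⟩
    obtain ⟨k, hk⟩ := Nat.exists_eq_add_of_lt hij
    change rotate d (splitMove (i, j)) ∈ AddSubgroup.closure (Set.range splitMove)
    rw [rotate_splitMove hk.symm]
    exact zsmul_mem (AddSubgroup.subset_closure (Set.mem_range_self _)) _
  exact le_comap hw

theorem stmt_13 (d : ℕ) (w : (ℕ × ℕ) →₀ ℤ) (hw : IsOutcome w)
    (hsupp : ∀ p : ℕ × ℕ, w p ≠ 0 → p.1 + p.2 ≤ d)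
    (w' : (ℕ × ℕ) →₀ ℤ)
    (hw' : ∀ p : ℕ × ℕ, w' p =
      if p.1 + p.2 ≤ d then (-1 : ℤ) ^ (d - p.2) * w (p.2, d - p.1 - p.2) else 0) :
    IsOutcome w' := by
  have hrotate : w' = rotate d w := by
    ext p
    rw [hw', rotate_apply]
  rw [hrotate]
  exact isOutcome_rotate (hw.mem_boundedOutcomes hsupp)
end

section
/- For every integer k ≥ 0 and every real number t, the identity t^{2k+1} + ∑_{i=0}^{k} ((2k+1)/(2i+1))·C(k+i, 2i)·t^{k−i}·(1−t)^{2i+1} = 1 holds, where C(k+i, 2i) is the binomial coefficient. -/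
/-!
The numbers `x` and `-y` are the roots of `z ^ 2 = (x - y) * z + x * y`. For the Lucas sequence `U`
of this recurrence, `U (n + 1) + y * U n = x ^ n` and `U (n + 1) - x * U n = (-y) ^ n`, so
`x ^ n + (-y) ^ n = 2 * U (n + 1) - (x - y) * U n`. For `n = 2 * k + 1`, expanding both terms on the
right by the binomial formula for Lucas sequences gives the identity at `x = 1`, `y = t`.
-/

open Finset

theorem sum_antidiagonal_eq_sum_range_of_lt {M : Type*} [AddCommMonoid M] {f : ℕ → ℕ → M}
    (hf : ∀ a b, a < b → f a b = 0) {m k : ℕ} (hmk : m ≤ k + 1) :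
    ∑ ab ∈ antidiagonal (m + k), f ab.1 ab.2 = ∑ i ∈ range (k + 1), f (m + i) (k - i) := by
  rw [Nat.sum_antidiagonal_eq_sum_range_succ f, Nat.succ_eq_add_one, add_assoc, sum_range_add,
    sum_eq_zero fun a ha ↦ hf _ _ ?_, zero_add]
  · simp only [Nat.add_sub_add_left]
  · have := mem_range.1 ha
    lia

theorem cast_choose_succ_succ_mul_pow_mul_pow {R : Type*} [CommSemiring R] (p q : R) (a b : ℕ) :
    ((a + 1).choose (b + 1) : R) * p ^ (a - b) * q ^ (b + 1) =
      p * ((a.choose (b + 1) : R) * p ^ (a - (b + 1)) * q ^ (b + 1)) +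
        q * ((a.choose b : R) * p ^ (a - b) * q ^ b) := by
  rcases lt_or_ge b a with hba | hab
  · obtain ⟨c, rfl⟩ := Nat.exists_eq_add_of_lt hba
    rw [Nat.choose_succ_succ', show b + c + 1 - b = c + 1 by lia,
      show b + c + 1 - (b + 1) = c by lia]
    push_cast
    ring
  · rw [Nat.choose_succ_succ', Nat.choose_eq_zero_of_lt (Nat.lt_succ_of_le hab)]
    push_cast
    ring

/-- The Lucas sequence of the first kind, with the sign of the second parameter chosen so that it
makes sense in semirings: `lucasU p q n` is classically written `U_n(p, -q)`, and `lucasU 1 1` is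
the Fibonacci sequence. -/
def lucasU {R : Type*} [CommSemiring R] (p q : R) : ℕ → R
  | 0 => 0
  | 1 => 1
  | n + 2 => p * lucasU p q (n + 1) + q * lucasU p q n

namespace lucasU

section CommSemiring

variable {R : Type*} [CommSemiring R] (p q : R)

/-- The case `p = q = 1` is `Nat.fib_succ_eq_sum_choose`. Truncated subtraction in the exponent of
`p` is harmless because `a.choose b = 0` for `a < b`. -/
theorem succ_eq_sum_choose (n : ℕ) :
    lucasU p q (n + 1) = ∑ ab ∈ antidiagonal n,
      (ab.1.choose ab.2 : R) * p ^ (ab.1 - ab.2) * q ^ ab.2 := by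
  induction n using Nat.twoStepInduction with
  | zero => simp [lucasU]
  | one => simp [lucasU, Nat.antidiagonal_succ]
  | more n ih₀ ih₁ =>
    rw [lucasU, ih₀, ih₁, Nat.antidiagonal_succ_succ', Nat.antidiagonal_succ']
    simp [cast_choose_succ_succ_mul_pow_mul_pow, sum_add_distrib, ← mul_sum]
    ring

theorem two_mul_add_succ_eq_sum (k : ℕ) {ε : ℕ} (hε : ε ≤ 1) :
    lucasU p q (2 * k + ε + 1) = ∑ i ∈ range (k + 1),
      ((k + i + ε).choose (2 * i + ε) : R) * q ^ (k - i) * p ^ (2 * i + ε) := by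
  rw [succ_eq_sum_choose, two_mul, add_right_comm, sum_antidiagonal_eq_sum_range_of_lt
    (f := fun a b ↦ (a.choose b : R) * p ^ (a - b) * q ^ b)
    (fun a b hab ↦ by simp [Nat.choose_eq_zero_of_lt hab]) (Nat.add_le_add_left hε k)]
  refine sum_congr rfl fun i hi ↦ ?_
  have hik : k + i + ε = (k - i) + (2 * i + ε) := by have := mem_range.1 hi; lia
  rw [add_right_comm k ε i, Nat.choose_symm_of_eq_add hik, Nat.sub_eq_of_eq_add' hik,
    mul_right_comm]

end CommSemiring

section CommRing

variable {R : Type*} [CommRing R] (x y : R) (n : ℕ)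

theorem succ_add_mul_eq_pow :
    lucasU (x - y) (x * y) (n + 1) + y * lucasU (x - y) (x * y) n = x ^ n := by
  induction n with
  | zero => simp [lucasU]
  | succ n ih =>
    rw [lucasU]
    linear_combination x * ih

theorem succ_sub_mul_eq_neg_pow :
    lucasU (x - y) (x * y) (n + 1) - x * lucasU (x - y) (x * y) n = (-y) ^ n := by
  have h := succ_add_mul_eq_pow (-y) (-x) n
  rwa [neg_sub_neg, neg_mul_neg, mul_comm y x, neg_mul, ← sub_eq_add_neg] at h

theorem pow_add_neg_pow_eq :
    x ^ n + (-y) ^ n =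
      2 * lucasU (x - y) (x * y) (n + 1) - (x - y) * lucasU (x - y) (x * y) n := by
  rw [← succ_add_mul_eq_pow x y, ← succ_sub_mul_eq_neg_pow x y]
  ring

end CommRing

end lucasU

theorem div_mul_choose_eq_two_mul_choose_sub {K : Type*} [Field K] [CharZero K] (k i : ℕ) :
    ((2 * k + 1 : K) / (2 * i + 1)) * ((k + i).choose (2 * i) : K) =
      2 * ((k + i + 1).choose (2 * i + 1) : K) - ((k + i).choose (2 * i) : K) := by
  have absorption : (k + i + 1 : K) * ((k + i).choose (2 * i) : K) =
      ((k + i + 1).choose (2 * i + 1) : K) * (2 * i + 1) := by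
    exact_mod_cast Nat.add_one_mul_choose_eq (k + i) (2 * i)
  have hi : (2 * i + 1 : K) ≠ 0 := by exact_mod_cast (2 * i).succ_ne_zero
  rw [div_mul_eq_mul_div, div_eq_iff hi]
  linear_combination 2 * absorption

/-- The coefficients are the integers `(2 * k + 1) / (2 * i + 1) * (k + i).choose (2 * i)`, written
without division. -/
theorem stmt_16_general {R : Type*} [CommRing R] (k : ℕ) (x y : R) :
    y ^ (2 * k + 1) + ∑ i ∈ range (k + 1),
      (2 * ((k + i + 1).choose (2 * i + 1) : R) - ((k + i).choose (2 * i) : R))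
        * (x * y) ^ (k - i) * (x - y) ^ (2 * i + 1) = x ^ (2 * k + 1) := by
  have h_even := lucasU.two_mul_add_succ_eq_sum (x - y) (x * y) k le_rfl
  have h_odd := lucasU.two_mul_add_succ_eq_sum (x - y) (x * y) k zero_le_one
  simp only [add_zero] at h_odd
  have h_pow := lucasU.pow_add_neg_pow_eq x y (2 * k + 1)
  rw [(odd_two_mul_add_one k).neg_pow, ← sub_eq_add_neg, h_even, h_odd, mul_sum, mul_sum,
    ← sum_sub_distrib] at h_pow
  rw [← eq_sub_iff_add_eq', h_pow]
  exact sum_congr rfl fun i _ ↦ by ring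

theorem stmt_16 (k : ℕ) (t : ℝ) :
    t ^ (2 * k + 1) + ∑ i ∈ Finset.range (k + 1),
      ((2 * k + 1 : ℝ) / (2 * i + 1)) * ((k + i).choose (2 * i) : ℝ)
        * t ^ (k - i) * (1 - t) ^ (2 * i + 1) = 1 := by
  simpa only [div_mul_choose_eq_two_mul_choose_sub, one_mul, one_pow] using stmt_16_general k 1 t
end

section
/- Let k ≥ 0 be an integer and define the finitely supported function w : ℕ × ℕ → ℚ by w(0,0) := −1, w(2k+1, 0) := 1, w(k−i, 2i+1) := ((2k+1)/(2i+1))·C(k+i, 2i) for each 0 ≤ i ≤ k, and w(i,j) := 0 at all other points. Then w is a valid rational chipsplitting outcome; moreover its degree is 2k+1 and its positive support has exactly k+2 elements. -/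
/-- The splitting-move vector at a grid point `p = (i,j)`, with rational entries:
`δ_{(i+1,j)} + δ_{(i,j+1)} − δ_{(i,j)}`. -/
noncomputable def splitMoveQ (p : ℕ × ℕ) : (ℕ × ℕ) →₀ ℚ :=
  Finsupp.single (p.1 + 1, p.2) 1 + Finsupp.single (p.1, p.2 + 1) 1 - Finsupp.single p 1

/-- A rational chip configuration is a rational chipsplitting outcome if it lies in
the ℚ-linear span of the splitting-move vectors. -/
def IsOutcomeQ (w : (ℕ × ℕ) →₀ ℚ) : Prop :=
  w ∈ Submodule.span ℚ (Set.range splitMoveQ)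

/-!
Evaluate a chip at `(i, j)` as `x ^ i * (1 - x) ^ j`. This kills every splitting move, and nothing
else: modulo the moves every chip can be pushed to the axis `j = 0`, where the evaluations `x ^ i`
are linearly independent. So an outcome is the same thing as a polynomial identity, here
`1 - x ^ (2k+1) = ∑ i ≤ k, (2k+1)/(2i+1) * C(k+i, 2i) * x ^ (k-i) * (1 - x) ^ (2i+1)`.
This is the case `a = 1`, `b = x` of the expansion of `a ^ (2k+1) - b ^ (2k+1)` in `a * b` and
`a - b`. Both `a` and `-b` are roots of `z ^ 2 = d * z + t` with `d = a - b` and `t = a * b`, and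
the odd powers of such a root are `z ^ (2k+1) = z * F_{2k+1} + t * F_{2k}`, where the `F_n` are the
Fibonacci polynomials in `d` and `t`; adding the odd powers of `a` and of `-b` gives the expansion.
-/

open Finset Polynomial

section FibonacciPolynomials

variable {R : Type*} [CommSemiring R]

/-- The Fibonacci polynomial `F_{2k+1}` in `d` and `t`, where `F_0 = 0`, `F_1 = 1` and
`F_{n+2} = d * F_{n+1} + t * F_n`. -/
def fibOdd (d t : R) (k : ℕ) : R :=
  ∑ i ∈ range (k + 1), ((k + i).choose (2 * i) : R) * (t ^ (k - i) * d ^ (2 * i))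

/-- The product `t * F_{2k}` for the Fibonacci polynomials `F` of `fibOdd`. The factor `t` lets the
sum have the index range and the exponents of `t` of `fibOdd`; its term `i = k` vanishes. -/
def mulFibEven (d t : R) (k : ℕ) : R :=
  ∑ i ∈ range (k + 1), ((k + i).choose (2 * i + 1) : R) * (t ^ (k - i) * d ^ (2 * i + 1))

variable (d t : R) (k : ℕ)

theorem mul_fibOdd_add_mulFibEven :
    d * fibOdd d t k + mulFibEven d t k =
      ∑ i ∈ range (k + 1),
        ((k + i + 1).choose (2 * i + 1) : R) * (t ^ (k - i) * d ^ (2 * i + 1)) := by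
  rw [fibOdd, mulFibEven, mul_sum, ← sum_add_distrib]
  refine sum_congr rfl fun i _ => ?_
  rw [Nat.choose_succ_succ]
  push_cast
  ring

theorem mulFibEven_succ :
    mulFibEven d t (k + 1) = t * (d * fibOdd d t k + mulFibEven d t k) := by
  rw [mul_fibOdd_add_mulFibEven, mulFibEven, sum_range_succ,
    Nat.choose_eq_zero_of_lt (show k + 1 + (k + 1) < 2 * (k + 1) + 1 by lia), Nat.cast_zero,
    zero_mul, add_zero, mul_sum]
  refine sum_congr rfl fun i hi => ?_
  rw [Nat.sub_add_comm (mem_range_succ_iff.mp hi), add_right_comm k 1 i]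
  ring

theorem mul_fibOdd_eq_sum_range_add_two :
    t * fibOdd d t k =
      ∑ i ∈ range (k + 2), ((k + i).choose (2 * i) : R) * (t ^ (k + 1 - i) * d ^ (2 * i)) := by
  rw [sum_range_succ, Nat.choose_eq_zero_of_lt (show k + (k + 1) < 2 * (k + 1) by lia),
    Nat.cast_zero, zero_mul, add_zero, fibOdd, mul_sum]
  refine sum_congr rfl fun i hi => ?_
  rw [Nat.sub_add_comm (mem_range_succ_iff.mp hi)]
  ring

theorem fibOdd_succ :
    fibOdd d t (k + 1) = d * (d * fibOdd d t k + mulFibEven d t k) + t * fibOdd d t k := by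
  rw [mul_fibOdd_add_mulFibEven, mul_fibOdd_eq_sum_range_add_two, fibOdd, sum_range_succ' _ (k + 1),
    sum_range_succ' _ (k + 1), ← add_assoc, mul_sum, ← sum_add_distrib]
  congr 1
  · refine sum_congr rfl fun i _ => ?_
    have pascal : (k + 1 + (i + 1)).choose (2 * (i + 1)) =
        (k + i + 1).choose (2 * i + 1) + (k + (i + 1)).choose (2 * (i + 1)) := by
      rw [add_right_comm k 1 (i + 1)]
      exact Nat.choose_succ_succ (k + i + 1) (2 * i + 1)
    rw [pascal, Nat.add_sub_add_right]
    push_cast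
    ring
  · simp

variable {d t} in
theorem pow_two_mul_add_one_of_sq_eq {x : R} (hx : x ^ 2 = d * x + t) :
    x ^ (2 * k + 1) = x * fibOdd d t k + mulFibEven d t k := by
  induction k with
  | zero => simp [fibOdd, mulFibEven]
  | succ k ih =>
    calc x ^ (2 * (k + 1) + 1)
        = x ^ 2 * (x * fibOdd d t k) + x ^ 2 * mulFibEven d t k := by
          rw [← mul_add, ← ih]
          ring
      _ = d * x ^ 2 * fibOdd d t k + t * x * fibOdd d t k + x ^ 2 * mulFibEven d t k := by
          nth_rw 1 [hx]
          ring
      _ = x * (d * (d * fibOdd d t k + mulFibEven d t k) + t * fibOdd d t k) +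
            t * (d * fibOdd d t k + mulFibEven d t k) := by
          rw [hx]
          ring
      _ = x * fibOdd d t (k + 1) + mulFibEven d t (k + 1) := by
          rw [fibOdd_succ, mulFibEven_succ]

end FibonacciPolynomials

theorem pow_two_mul_add_one_sub_pow_eq_sum {R : Type*} [CommRing R] (a b : R) (k : ℕ) :
    a ^ (2 * k + 1) - b ^ (2 * k + 1) =
      ∑ i ∈ range (k + 1), ((k + i).choose (2 * i) + 2 * (k + i).choose (2 * i + 1) : R) *
        ((a * b) ^ (k - i) * (a - b) ^ (2 * i + 1)) := by
  have ha : a ^ (2 * k + 1) = a * fibOdd (a - b) (a * b) k + mulFibEven (a - b) (a * b) k :=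
    pow_two_mul_add_one_of_sq_eq k (by ring)
  have hb : (-b) ^ (2 * k + 1) = -b * fibOdd (a - b) (a * b) k + mulFibEven (a - b) (a * b) k :=
    pow_two_mul_add_one_of_sq_eq k (by ring)
  rw [Odd.neg_pow ⟨k, rfl⟩] at hb
  calc a ^ (2 * k + 1) - b ^ (2 * k + 1)
      = (a - b) * fibOdd (a - b) (a * b) k + 2 * mulFibEven (a - b) (a * b) k := by
        linear_combination ha + hb
    _ = _ := by
      rw [fibOdd, mulFibEven, mul_sum, mul_sum, ← sum_add_distrib]
      exact sum_congr rfl fun i _ => by ring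

theorem div_mul_choose_two_mul {K : Type*} [Field K] [CharZero K] (k i : ℕ) :
    (2 * k + 1 : K) / (2 * i + 1) * (k + i).choose (2 * i) =
      (k + i).choose (2 * i) + 2 * (k + i).choose (2 * i + 1) := by
  have absorb : (k + i + 1 : K) * (k + i).choose (2 * i) =
      ((k + i).choose (2 * i) + (k + i).choose (2 * i + 1)) * (2 * i + 1) := by
    have h := Nat.add_one_mul_choose_eq (k + i) (2 * i)
    rw [Nat.choose_succ_succ] at h
    exact_mod_cast h
  have hne : (2 * i + 1 : K) ≠ 0 := by exact_mod_cast (2 * i).succ_ne_zero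
  rw [div_mul_eq_mul_div, div_eq_iff hne]
  linear_combination 2 * absorb

section Evaluation

/-- The evaluation of a chip configuration: a chip at `(i, j)` counts `X ^ i * (1 - X) ^ j`. -/
noncomputable def chipPoly : ((ℕ × ℕ) →₀ ℚ) →ₗ[ℚ] ℚ[X] :=
  Finsupp.linearCombination ℚ fun p => X ^ p.1 * (1 - X) ^ p.2

theorem chipPoly_single (p : ℕ × ℕ) (c : ℚ) :
    chipPoly (Finsupp.single p c) = c • (X ^ p.1 * (1 - X) ^ p.2) :=
  Finsupp.linearCombination_single ..

/-- The section of `chipPoly` that writes a polynomial as a configuration of chips on the axis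
`j = 0`, with `X ^ i` going to one chip at `(i, 0)`. -/
noncomputable def axisChips : ℚ[X] →ₗ[ℚ] ((ℕ × ℕ) →₀ ℚ) :=
  (basisMonomials ℚ).constr ℚ fun i => Finsupp.single (i, 0) 1

theorem axisChips_X_pow (i : ℕ) : axisChips (X ^ i) = Finsupp.single (i, 0) 1 := by
  simpa only [axisChips, coe_basisMonomials, ← X_pow_eq_monomial] using
    (basisMonomials ℚ).constr_basis ℚ (fun i => Finsupp.single (i, 0) (1 : ℚ)) i

theorem isOutcomeQ_single_sub_axisChips (i j : ℕ) :
    IsOutcomeQ (Finsupp.single (i, j) 1 - axisChips (X ^ i * (1 - X) ^ j)) := by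
  induction j generalizing i with
  | zero => simp [IsOutcomeQ, axisChips_X_pow]
  | succ j ih =>
    have hpoly : (X ^ i * (1 - X) ^ (j + 1) : ℚ[X]) =
        X ^ i * (1 - X) ^ j - X ^ (i + 1) * (1 - X) ^ j := by ring
    have hsplit : Finsupp.single (i, j + 1) 1 - axisChips (X ^ i * (1 - X) ^ (j + 1)) =
        splitMoveQ (i, j) + (Finsupp.single (i, j) 1 - axisChips (X ^ i * (1 - X) ^ j)) -
          (Finsupp.single (i + 1, j) 1 - axisChips (X ^ (i + 1) * (1 - X) ^ j)) := by
      rw [hpoly, map_sub, splitMoveQ]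
      abel
    rw [hsplit]
    exact sub_mem (add_mem (Submodule.subset_span ⟨(i, j), rfl⟩) (ih i)) (ih (i + 1))

theorem isOutcomeQ_sub_axisChips_chipPoly (w : (ℕ × ℕ) →₀ ℚ) :
    IsOutcomeQ (w - axisChips (chipPoly w)) := by
  induction w using Finsupp.induction_linear with
  | zero => simp [IsOutcomeQ]
  | add v w hv hw =>
    rw [map_add, map_add, add_sub_add_comm]
    exact add_mem hv hw
  | single p c =>
    rw [chipPoly_single, map_smul, ← Finsupp.smul_single_one, ← smul_sub]
    exact Submodule.smul_mem _ c (isOutcomeQ_single_sub_axisChips p.1 p.2)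

theorem chipPoly_splitMoveQ (p : ℕ × ℕ) : chipPoly (splitMoveQ p) = 0 := by
  simp only [splitMoveQ, map_add, map_sub, chipPoly_single, one_smul]
  ring

theorem isOutcomeQ_iff_chipPoly_eq_zero {w : (ℕ × ℕ) →₀ ℚ} :
    IsOutcomeQ w ↔ chipPoly w = 0 := by
  constructor
  · have hle : Submodule.span ℚ (Set.range splitMoveQ) ≤ LinearMap.ker chipPoly :=
      Submodule.span_le.mpr (Set.range_subset_iff.mpr chipPoly_splitMoveQ)
    exact fun hw => hle hw
  · intro hw
    simpa only [hw, map_zero, sub_zero] using isOutcomeQ_sub_axisChips_chipPoly w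

end Evaluation

/-- The configuration `w` of the theorem, as a sum of point masses. -/
noncomputable def oddPowConfig (k : ℕ) : (ℕ × ℕ) →₀ ℚ :=
  Finsupp.single (2 * k + 1, 0) 1 - Finsupp.single (0, 0) 1 +
    ∑ i ∈ range (k + 1), Finsupp.single (k - i, 2 * i + 1)
      ((2 * k + 1 : ℚ) / (2 * i + 1) * (k + i).choose (2 * i))

/-- The points other than the origin at which `oddPowConfig k` has chips: its positive support. -/
def oddPowSupport (k : ℕ) : Finset (ℕ × ℕ) :=
  insert (2 * k + 1, 0) ((range (k + 1)).image fun i => (k - i, 2 * i + 1))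

theorem mem_oddPowSupport {k : ℕ} {p : ℕ × ℕ} :
    p ∈ oddPowSupport k ↔ p = (2 * k + 1, 0) ∨ ∃ i ≤ k, p = (k - i, 2 * i + 1) := by
  simp [oddPowSupport, eq_comm]

theorem card_oddPowSupport (k : ℕ) : (oddPowSupport k).card = k + 2 := by
  have hinj : Function.Injective fun i => (k - i, 2 * i + 1) := fun i j hij => by
    simp only [Prod.mk.injEq] at hij
    lia
  rw [oddPowSupport, card_insert_of_notMem (by simp), card_image_of_injective _ hinj, card_range]

theorem fst_add_snd_le_of_mem_oddPowSupport {k : ℕ} {p : ℕ × ℕ} (hp : p ∈ oddPowSupport k) :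
    p.1 + p.2 ≤ 2 * k + 1 := by
  rcases mem_oddPowSupport.mp hp with rfl | ⟨i, hi, rfl⟩ <;> lia

namespace oddPowConfig

variable {k : ℕ} {p : ℕ × ℕ}

theorem chipPoly_eq_zero (k : ℕ) : chipPoly (oddPowConfig k) = 0 := by
  have expansion := pow_two_mul_add_one_sub_pow_eq_sum (1 : ℚ[X]) X k
  rw [one_pow, one_mul] at expansion
  have hsum : ∑ i ∈ range (k + 1), chipPoly (Finsupp.single (k - i, 2 * i + 1)
      ((2 * k + 1 : ℚ) / (2 * i + 1) * (k + i).choose (2 * i))) = 1 - X ^ (2 * k + 1) := by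
    rw [expansion]
    refine sum_congr rfl fun i _ => ?_
    rw [chipPoly_single, div_mul_choose_two_mul, smul_eq_C_mul]
    simp only [map_add, map_mul, map_natCast, map_ofNat]
  rw [oddPowConfig, map_add, map_sub, map_sum, hsum, chipPoly_single, chipPoly_single]
  simp

theorem apply_origin (k : ℕ) : oddPowConfig k (0, 0) = -1 := by
  simp [oddPowConfig]

theorem apply_top (k : ℕ) : oddPowConfig k (2 * k + 1, 0) = 1 := by
  simp [oddPowConfig]

theorem apply_row {i : ℕ} (hi : i ≤ k) : oddPowConfig k (k - i, 2 * i + 1) =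
    (2 * k + 1 : ℚ) / (2 * i + 1) * (k + i).choose (2 * i) := by
  have hrow (j : ℕ) : (k - j, 2 * j + 1) = (k - i, 2 * i + 1) ↔ j = i := by
    rw [Prod.mk.injEq]
    lia
  simp [oddPowConfig, Finsupp.single_apply, hrow, hi]

theorem apply_eq_zero (h0 : p ≠ (0, 0)) (hp : p ∉ oddPowSupport k) : oddPowConfig k p = 0 := by
  simp only [mem_oddPowSupport, not_or, not_exists, not_and] at hp
  have hrows : ∑ i ∈ range (k + 1), Finsupp.single (k - i, 2 * i + 1)
      ((2 * k + 1 : ℚ) / (2 * i + 1) * (k + i).choose (2 * i)) p = 0 :=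
    sum_eq_zero fun i hi => Finsupp.single_eq_of_ne (hp.2 i (mem_range_succ_iff.mp hi))
  rw [oddPowConfig, Finsupp.add_apply, Finsupp.finsetSum_apply, hrows]
  simp [h0, hp.1]

theorem apply_pos (hp : p ∈ oddPowSupport k) : 0 < oddPowConfig k p := by
  rcases mem_oddPowSupport.mp hp with rfl | ⟨i, hi, rfl⟩
  · simp [apply_top]
  · have hchoose : 0 < (k + i).choose (2 * i) := Nat.choose_pos (by lia)
    rw [apply_row hi]
    positivity

theorem eq_origin_of_apply_neg (hp : oddPowConfig k p < 0) : p = (0, 0) := by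
  by_contra h0
  by_cases hmem : p ∈ oddPowSupport k
  · exact hp.not_gt (apply_pos hmem)
  · exact hp.ne (apply_eq_zero h0 hmem)

theorem apply_pos_iff : 0 < oddPowConfig k p ↔ p ∈ oddPowSupport k := by
  refine ⟨fun hp => ?_, apply_pos⟩
  by_contra hmem
  refine hp.ne' (apply_eq_zero ?_ hmem)
  rintro rfl
  norm_num [apply_origin] at hp

theorem fst_add_snd_le (hp : oddPowConfig k p ≠ 0) : p.1 + p.2 ≤ 2 * k + 1 := by
  rcases lt_or_gt_of_ne hp with hneg | hpos
  · simp [eq_origin_of_apply_neg hneg]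
  · exact fst_add_snd_le_of_mem_oddPowSupport (apply_pos_iff.mp hpos)

theorem ncard_setOf_apply_pos (k : ℕ) : {p | 0 < oddPowConfig k p}.ncard = k + 2 := by
  simp only [apply_pos_iff, setOfPred_mem, Set.ncard_coe_finset, card_oddPowSupport]

theorem eq_of_apply {w : (ℕ × ℕ) →₀ ℚ} (h00 : w (0, 0) = -1) (htop : w (2 * k + 1, 0) = 1)
    (hrow : ∀ i ≤ k, w (k - i, 2 * i + 1) =
      (2 * k + 1 : ℚ) / (2 * i + 1) * (k + i).choose (2 * i))
    (hzero : ∀ p ≠ (0, 0), p ∉ oddPowSupport k → w p = 0) : w = oddPowConfig k := by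
  ext p
  by_cases h0 : p = (0, 0)
  · rw [h0, h00, apply_origin]
  by_cases hmem : p ∈ oddPowSupport k
  · rcases mem_oddPowSupport.mp hmem with rfl | ⟨i, hi, rfl⟩
    · rw [htop, apply_top]
    · rw [hrow i hi, apply_row hi]
  · rw [hzero p h0 hmem, apply_eq_zero h0 hmem]

end oddPowConfig

theorem stmt_17 (k : ℕ) (w : (ℕ × ℕ) →₀ ℚ)
    (h00 : w (0, 0) = -1)
    (htop : w (2 * k + 1, 0) = 1)
    (hrow : ∀ i : ℕ, i ≤ k → w (k - i, 2 * i + 1)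
      = ((2 * k + 1 : ℚ) / (2 * i + 1)) * ((k + i).choose (2 * i) : ℚ))
    (hzero : ∀ p : ℕ × ℕ, p ≠ (0, 0) → p ≠ (2 * k + 1, 0) →
      (∀ i : ℕ, i ≤ k → p ≠ (k - i, 2 * i + 1)) → w p = 0) :
    IsOutcomeQ w ∧
    (∀ p : ℕ × ℕ, w p < 0 → p = (0, 0)) ∧
    (∀ p : ℕ × ℕ, w p ≠ 0 → p.1 + p.2 ≤ 2 * k + 1) ∧
    (∃ p : ℕ × ℕ, w p ≠ 0 ∧ p.1 + p.2 = 2 * k + 1) ∧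
    {p : ℕ × ℕ | 0 < w p}.ncard = k + 2 := by
  obtain rfl : w = oddPowConfig k := by
    refine oddPowConfig.eq_of_apply h00 htop hrow fun p h0 hp => ?_
    simp only [mem_oddPowSupport, not_or, not_exists, not_and] at hp
    exact hzero p h0 hp.1 hp.2
  exact ⟨isOutcomeQ_iff_chipPoly_eq_zero.mpr (oddPowConfig.chipPoly_eq_zero k),
    fun _ => oddPowConfig.eq_origin_of_apply_neg,
    fun _ => oddPowConfig.fst_add_snd_le,
    ⟨(2 * k + 1, 0), htop.trans_ne one_ne_zero, rfl⟩,
    oddPowConfig.ncard_setOf_apply_pos k⟩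
end

section
/- Every reduced model is a convex combination of finitely many fundamental reduced models supported inside its own support: if f is a reduced model, then there exist m ≥ 1, fundamental reduced models f₁, …, f_m with supp(f_k) ⊆ supp(f) for all k, and real numbers μ₁, …, μ_m > 0 with μ₁ + ⋯ + μ_m = 1, such that f = μ₁·f₁ + ⋯ + μ_m·f_m. -/
/-- A reduced model: a finitely supported nonnegative function `f` on the grid with
`f(0,0) = 0` whose associated combination of `t^i (1−t)^j` is identically `1`. -/
def IsReducedModel (f : (ℕ × ℕ) →₀ ℝ) : Prop :=
  (∀ p : ℕ × ℕ, 0 ≤ f p) ∧ f (0, 0) = 0 ∧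
    ∀ t : ℝ, ∑ p ∈ f.support, f p * t ^ p.1 * (1 - t) ^ p.2 = 1

/-- A reduced model `f` is fundamental if any finitely supported function supported
inside `supp(f)` whose associated combination is identically `1` equals `f`. -/
def IsFundamentalRM (f : (ℕ × ℕ) →₀ ℝ) : Prop :=
  IsReducedModel f ∧
    ∀ g : (ℕ × ℕ) →₀ ℝ, g.support ⊆ f.support →
      (∀ t : ℝ, ∑ p ∈ g.support, g p * t ^ p.1 * (1 - t) ^ p.2 = 1) → g = f

/-!
Reduced models are nonnegative solutions of a linear system `A x = b`, the unknowns being the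
coefficients, and fundamental models are its basic solutions. If a nonnegative solution `x` is not
basic, another solution with support in that of `x` gives a direction `h ≠ 0` in the kernel
of `A`. Evaluating at `t = 1/2`, where all monomials `t ^ i * (1 - t) ^ j` are positive, shows that
neither `h` nor `-h` is nonnegative, so moving from `x` along `h` and along `-h` one reaches in
both cases a nonnegative solution of strictly smaller support, and `x` lies between the two.
Induct on the support.
-/

lemma support_add_smul_subset {ι R M : Type*} [AddZeroClass M] [SMulZeroClass R M]
    {x h : ι →₀ M} (hsupp : h.support ⊆ x.support) (s : R) :
    (x + s • h).support ⊆ x.support := by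
  classical
  exact Finsupp.support_add.trans
    (Finset.union_subset subset_rfl (Finsupp.support_smul.trans hsupp))

lemma eq_zero_of_linearCombination_eq_zero_of_pos {ι R : Type*} [Semiring R] [PartialOrder R]
    [IsStrictOrderedRing R] {w : ι → R} {h : ι →₀ R} (hw : ∀ i, 0 < w i) (hh : 0 ≤ h)
    (hsum : Finsupp.linearCombination R w h = 0) : h = 0 := by
  have hterm : ∀ i ∈ h.support, h i • w i = 0 :=
    (Finset.sum_eq_zero_iff_of_nonneg fun i _ => mul_nonneg (hh i) (hw i).le).1 hsum
  ext i
  by_contra hi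
  exact (mul_pos ((hh i).lt_of_ne' hi) (hw i)).ne' (hterm i (Finsupp.mem_support_iff.2 hi))

section LinearProgramming

variable {ι 𝕜 E : Type*} [Field 𝕜] [LinearOrder 𝕜] [IsStrictOrderedRing 𝕜]
  [AddCommGroup E] [Module 𝕜 E]

/-- Feasible points of the linear program with equality constraints `A x = b` and sign constraints
`0 ≤ x`, in finitely many nonzero variables out of a possibly infinite index type. -/
def IsFeasible (A : (ι →₀ 𝕜) →ₗ[𝕜] E) (b : E) (x : ι →₀ 𝕜) : Prop :=
  0 ≤ x ∧ A x = b

/-- Basic feasible points of a linear program. Linear independence of the columns of `A` indexed by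
the support of `x` is encoded as uniqueness of the solution of `A y = b` on that support; `y` is not
required to be nonnegative. -/
def IsBasicFeasible (A : (ι →₀ 𝕜) →ₗ[𝕜] E) (b : E) (x : ι →₀ 𝕜) : Prop :=
  IsFeasible A b x ∧ ∀ y : ι →₀ 𝕜, y.support ⊆ x.support → A y = b → y = x

variable {A : (ι →₀ 𝕜) →ₗ[𝕜] E} {b : E} {x h : ι →₀ 𝕜}

-- The minimum-ratio test of the simplex method: `s` is the least `x i / -h i` with `h i < 0`.
lemma exists_pos_add_smul_nonneg_support_ssubset (hx : 0 ≤ x) (hsupp : h.support ⊆ x.support)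
    (hneg : ¬ 0 ≤ h) :
    ∃ s : 𝕜, 0 < s ∧ 0 ≤ x + s • h ∧ (x + s • h).support ⊂ x.support := by
  obtain ⟨q, hq⟩ : ∃ q, h q < 0 := by simpa [Finsupp.le_def] using hneg
  have hnonempty : {i ∈ h.support | h i < 0}.Nonempty := ⟨q, by simp [hq, hq.ne]⟩
  obtain ⟨r, hr, hmin⟩ := Finset.exists_min_image _ (fun i => x i / -h i) hnonempty
  obtain ⟨hr_supp, hr_neg⟩ := Finset.mem_filter.1 hr
  have hxr : x r ≠ 0 := Finsupp.mem_support_iff.1 (hsupp hr_supp)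
  have hs : 0 < x r / -h r := div_pos ((hx r).lt_of_ne' hxr) (neg_pos.2 hr_neg)
  refine ⟨x r / -h r, hs, fun i => ?_, ?_⟩
  · change 0 ≤ x i + x r / -h r * h i
    rcases lt_or_ge (h i) 0 with hi | hi
    · have hratio : x r / -h r ≤ x i / -h i := hmin i (by simp [hi, hi.ne])
      rw [le_div_iff₀ (neg_pos.2 hi)] at hratio
      linarith
    · exact add_nonneg (hx i) (mul_nonneg hs.le hi)
  · rw [Finset.ssubset_iff_of_subset (support_add_smul_subset hsupp _)]
    have hvanish : (x + (x r / -h r) • h) r = 0 := by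
      simp [div_neg, div_mul_cancel₀ _ hr_neg.ne]
    exact ⟨r, hsupp hr_supp, Finsupp.notMem_support_iff.2 hvanish⟩

lemma IsFeasible.exists_pos_add_smul_support_ssubset (hx : IsFeasible A b x)
    (hsupp : h.support ⊆ x.support) (hker : A h = 0) (hneg : ¬ 0 ≤ h) :
    ∃ s : 𝕜, 0 < s ∧ IsFeasible A b (x + s • h) ∧ (x + s • h).support ⊂ x.support := by
  obtain ⟨s, hs, hnonneg, hlt⟩ := exists_pos_add_smul_nonneg_support_ssubset hx.1 hsupp hneg
  exact ⟨s, hs, ⟨hnonneg, by simp [hker, hx.2]⟩, hlt⟩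

lemma mem_segment_add_smul_add_smul_neg {s u : 𝕜} (hs : 0 < s) (hu : 0 < u) (x h : E) :
    x ∈ segment 𝕜 (x + s • h) (x + u • -h) := by
  rw [mem_segment_iff_sameRay]
  simpa using ((SameRay.refl (R := 𝕜) (-h)).pos_smul_left hs).pos_smul_right hu

lemma IsFeasible.exists_mem_segment_support_ssubset
    (hA : ∀ h : ι →₀ 𝕜, 0 ≤ h → A h = 0 → h = 0)
    (hx : IsFeasible A b x) (hbasic : ¬ IsBasicFeasible A b x) :
    ∃ y z, (IsFeasible A b y ∧ y.support ⊂ x.support) ∧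
      (IsFeasible A b z ∧ z.support ⊂ x.support) ∧ x ∈ segment 𝕜 y z := by
  classical
  obtain ⟨g, hg_supp, hg, hgx⟩ : ∃ g, g.support ⊆ x.support ∧ A g = b ∧ g ≠ x := by
    simpa [IsBasicFeasible, hx] using hbasic
  have hsupp : (g - x).support ⊆ x.support :=
    Finsupp.support_sub.trans (Finset.union_subset hg_supp subset_rfl)
  have hker : A (g - x) = 0 := by rw [map_sub, hg, hx.2, sub_self]
  have hker' : A (-(g - x)) = 0 := by rw [map_neg, hker, neg_zero]
  have hne : g - x ≠ 0 := sub_ne_zero.2 hgx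
  obtain ⟨s, hs, hy⟩ := hx.exists_pos_add_smul_support_ssubset hsupp hker
    fun hnonneg => hne (hA _ hnonneg hker)
  obtain ⟨u, hu, hz⟩ := hx.exists_pos_add_smul_support_ssubset
    ((Finsupp.support_neg _).trans_subset hsupp) hker'
    fun hnonneg => neg_ne_zero.2 hne (hA _ hnonneg hker')
  exact ⟨_, _, hy, hz, mem_segment_add_smul_add_smul_neg hs hu x (g - x)⟩

theorem IsFeasible.mem_convexHull_isBasicFeasible
    (hA : ∀ h : ι →₀ 𝕜, 0 ≤ h → A h = 0 → h = 0) (hx : IsFeasible A b x) :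
    x ∈ convexHull 𝕜 {y | IsBasicFeasible A b y ∧ y.support ⊆ x.support} := by
  induction hS : x.support using Finset.strongInduction generalizing x with
  | H S ih =>
    subst hS
    by_cases hbasic : IsBasicFeasible A b x
    · exact subset_convexHull 𝕜 _ ⟨hbasic, subset_rfl⟩
    · have mem_hull_of_ssubset {y : ι →₀ 𝕜} (hy : IsFeasible A b y ∧ y.support ⊂ x.support) :
          y ∈ convexHull 𝕜 {y | IsBasicFeasible A b y ∧ y.support ⊆ x.support} :=
        convexHull_mono (Set.ofPred_subset_ofPred.2 fun _ => And.imp_right (·.trans hy.2.subset))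
          (ih _ hy.2 hy.1 rfl)
      obtain ⟨y, z, hy, hz, hxyz⟩ := hx.exists_mem_segment_support_ssubset hA hbasic
      exact (convex_convexHull 𝕜 _).segment_subset
        (mem_hull_of_ssubset hy) (mem_hull_of_ssubset hz) hxyz

lemma exists_fin_pos_sum_smul_eq_of_mem_convexHull {s : Set E} {x : E}
    (hx : x ∈ convexHull 𝕜 s) :
    ∃ (m : ℕ) (z : Fin m → E) (w : Fin m → 𝕜), 1 ≤ m ∧ (∀ i, z i ∈ s) ∧ (∀ i, 0 < w i) ∧
      ∑ i, w i = 1 ∧ ∑ i, w i • z i = x := by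
  obtain ⟨κ, _, z, w, hz, -, hw, hw_sum, hwz⟩ := eq_pos_convex_span_of_mem_convexHull hx
  have : Nonempty κ := not_isEmpty_iff.1 fun _ => by simp at hw_sum
  let e := (Fintype.equivFin κ).symm
  exact ⟨Fintype.card κ, z ∘ e, w ∘ e, Fintype.card_pos, fun i => hz ⟨e i, rfl⟩, fun i => hw _,
    (e.sum_comp w).trans hw_sum, (e.sum_comp fun k => w k • z k).trans hwz⟩

end LinearProgramming

section ReducedModel

/-- The function `t ↦ ∑ f (i, j) * t ^ i * (1 - t) ^ j` attached to a coefficient vector `f`, as a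
linear map: the constraint matrix of the linear program with right-hand side `1` whose feasible
points are the reduced models, apart from the condition `f (0, 0) = 0`. -/
noncomputable def modelFunction : ((ℕ × ℕ) →₀ ℝ) →ₗ[ℝ] ℝ → ℝ :=
  Finsupp.linearCombination ℝ fun p t => t ^ p.1 * (1 - t) ^ p.2

lemma modelFunction_apply (f : (ℕ × ℕ) →₀ ℝ) (t : ℝ) :
    modelFunction f t = ∑ p ∈ f.support, f p * t ^ p.1 * (1 - t) ^ p.2 := by
  simp [modelFunction, Finsupp.linearCombination_apply, Finsupp.sum, mul_assoc]

lemma modelFunction_eq_one_iff {f : (ℕ × ℕ) →₀ ℝ} :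
    modelFunction f = 1 ↔ ∀ t : ℝ, ∑ p ∈ f.support, f p * t ^ p.1 * (1 - t) ^ p.2 = 1 := by
  simp only [funext_iff, modelFunction_apply, Pi.one_apply]

lemma eq_zero_of_nonneg_of_modelFunction_eq_zero {h : (ℕ × ℕ) →₀ ℝ} (hh : 0 ≤ h)
    (hker : modelFunction h = 0) : h = 0 := by
  refine eq_zero_of_linearCombination_eq_zero_of_pos
    (w := fun p : ℕ × ℕ => (1 / 2 : ℝ) ^ p.1 * (1 - 1 / 2) ^ p.2) (fun p => by positivity) hh ?_
  simpa [modelFunction, Finsupp.linearCombination_apply, Finsupp.sum] using congrFun hker (1 / 2)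

lemma isReducedModel_iff_isFeasible {f : (ℕ × ℕ) →₀ ℝ} :
    IsReducedModel f ↔ IsFeasible modelFunction 1 f ∧ f (0, 0) = 0 := by
  rw [IsReducedModel, IsFeasible, modelFunction_eq_one_iff, Finsupp.le_def,
    and_right_comm, and_assoc]
  rfl

lemma isFundamentalRM_iff_isBasicFeasible {f : (ℕ × ℕ) →₀ ℝ} :
    IsFundamentalRM f ↔ IsBasicFeasible modelFunction 1 f ∧ f (0, 0) = 0 := by
  simp only [IsFundamentalRM, IsBasicFeasible, isReducedModel_iff_isFeasible,
    modelFunction_eq_one_iff, and_right_comm]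

lemma IsBasicFeasible.isFundamentalRM_of_support_subset {f g : (ℕ × ℕ) →₀ ℝ}
    (hg : IsBasicFeasible modelFunction 1 g) (hsupp : g.support ⊆ f.support) (hf : f (0, 0) = 0) :
    IsFundamentalRM g :=
  isFundamentalRM_iff_isBasicFeasible.2
    ⟨hg, Finsupp.notMem_support_iff.1 fun h => Finsupp.mem_support_iff.1 (hsupp h) hf⟩

end ReducedModel

theorem stmt_18 (f : (ℕ × ℕ) →₀ ℝ) (hf : IsReducedModel f) :
    ∃ (m : ℕ) (F : Fin m → (ℕ × ℕ) →₀ ℝ) (μ : Fin m → ℝ),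
      1 ≤ m ∧
      (∀ a : Fin m, IsFundamentalRM (F a)) ∧
      (∀ a : Fin m, (F a).support ⊆ f.support) ∧
      (∀ a : Fin m, 0 < μ a) ∧
      (∑ a : Fin m, μ a = 1) ∧
      f = ∑ a : Fin m, μ a • F a := by
  obtain ⟨hfeas, hf₀⟩ := isReducedModel_iff_isFeasible.1 hf
  have hmem := hfeas.mem_convexHull_isBasicFeasible
    fun _ => eq_zero_of_nonneg_of_modelFunction_eq_zero
  obtain ⟨m, F, μ, hm, hF, hμ, hμ_sum, hμF⟩ := exists_fin_pos_sum_smul_eq_of_mem_convexHull hmem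
  exact ⟨m, F, μ, hm, fun a => (hF a).1.isFundamentalRM_of_support_subset (hF a).2 hf₀,
    fun a => (hF a).2, hμ, hμ_sum, hμF.symm⟩
end

section
/- Let w be a fundamental chipsplitting outcome of degree d whose positive support supp⁺(w) has exactly n + 1 elements. Then n ≤ d. -/
/-- A nonzero valid outcome `w` is fundamental if it cannot be written as
`μ₁·w₁ + μ₂·w₂` (as functions into ℚ) for positive rationals `μ₁, μ₂` and valid
outcomes `w₁, w₂` whose positive supports are proper subsets of that of `w`. -/
def IsFundamentalOutcome (w : (ℕ × ℕ) →₀ ℤ) : Prop :=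
  IsOutcome w ∧ IsValid w ∧ w ≠ 0 ∧
    ¬ ∃ (μ₁ μ₂ : ℚ) (w₁ w₂ : (ℕ × ℕ) →₀ ℤ),
        0 < μ₁ ∧ 0 < μ₂ ∧
        IsOutcome w₁ ∧ IsValid w₁ ∧ IsOutcome w₂ ∧ IsValid w₂ ∧
        {p : ℕ × ℕ | 0 < w₁ p} ⊂ {p : ℕ × ℕ | 0 < w p} ∧
        {p : ℕ × ℕ | 0 < w₂ p} ⊂ {p : ℕ × ℕ | 0 < w p} ∧
        ∀ p : ℕ × ℕ, (w p : ℚ) = μ₁ * (w₁ p : ℚ) + μ₂ * (w₂ p : ℚ)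

/-!
Suppose `supp⁺ w` had more than `d + 1` points. Modulo outcomes every `δ_p` of degree at most `d` is
a combination of the `d + 1` classes `δ_(k,0)`, `k ≤ d`, so some nonzero outcome `v` is supported on
`supp⁺ w`. A chip of mass `2^{-(i+j)}` at `(i,j)` makes every splitting move mass preserving, so
both `v` and `-v` have a negative entry. Moving from `w` along `v`, and along `-v`, until an entry
of `supp⁺ w` first vanishes yields two valid outcomes of strictly smaller positive support with
`w` a positive combination of them, so `w` is not fundamental.
-/

section Positivity

variable {σ R : Type*}

lemma exists_forall_mul_le_mul_of_pos [CommSemiring R] [LinearOrder R] [IsStrictOrderedRing R]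
    {s : Finset σ} (hs : s.Nonempty) (f : σ → R) {g : σ → R} (hg : ∀ p ∈ s, 0 < g p) :
    ∃ p ∈ s, ∀ q ∈ s, f p * g q ≤ f q * g p := by
  induction hs using Finset.Nonempty.cons_induction with
  | singleton a => simp
  | cons a s ha _ ih =>
    rw [Finset.forall_mem_cons] at hg
    obtain ⟨p, hp, hmin⟩ := ih hg.2
    rcases le_total (f p * g a) (f a * g p) with hpa | hap
    · exact ⟨p, Finset.mem_cons_of_mem hp, (Finset.forall_mem_cons ha _).2 ⟨hpa, hmin⟩⟩
    · refine ⟨a, Finset.mem_cons_self a s, (Finset.forall_mem_cons ha _).2 ⟨le_rfl, fun q hq ↦ ?_⟩⟩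
      refine le_of_mul_le_mul_right ?_ (hg.2 p hp)
      calc f a * g q * g p = f a * g p * g q := by ring
        _ ≤ f p * g a * g q := mul_le_mul_of_nonneg_right hap (hg.2 q hq).le
        _ = f p * g q * g a := by ring
        _ ≤ f q * g p * g a := mul_le_mul_of_nonneg_right (hmin q hq) hg.1.le
        _ = f q * g a * g p := by ring

/-- The coefficients move `w` along `v` up to the first point, namely a point `p` with `v p < 0`
minimizing `w p / -v p`, at which an entry vanishes; they are scaled to clear the denominator. -/
lemma exists_pos_smul_add_smul_setOf_pos_ssubset [CommRing R] [LinearOrder R]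
    [IsStrictOrderedRing R] {w v : σ →₀ R} (hneg : ∃ p, v p < 0) (hvw : ∀ p, v p ≠ 0 → 0 < w p) :
    ∃ a b : R, 0 < a ∧ 0 < b ∧ (∀ p, (a • w + b • v) p < 0 → w p < 0) ∧
      {p | 0 < (a • w + b • v) p} ⊂ {p | 0 < w p} := by
  obtain ⟨p, hp, hmin⟩ : ∃ p ∈ {p ∈ v.support | v p < 0},
      ∀ q ∈ {p ∈ v.support | v p < 0}, w p * -v q ≤ w q * -v p := by
    refine exists_forall_mul_le_mul_of_pos ?_ w fun q hq ↦ ?_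
    · exact hneg.imp fun q hq ↦ by simp [hq, hq.ne]
    · exact neg_pos.2 (Finset.mem_filter.1 hq).2
  simp only [Finset.mem_filter, Finsupp.mem_support_iff] at hp hmin
  have ha : 0 < -v p := neg_pos.2 hp.2
  have hb : 0 < w p := hvw p hp.1
  have nonneg_on_support : ∀ q, v q ≠ 0 → 0 ≤ (-v p • w + w p • v) q := by
    intro q hq
    simp only [Finsupp.add_apply, Finsupp.smul_apply, smul_eq_mul]
    rcases hq.lt_or_gt with hlt | hgt
    · linarith [hmin q ⟨hq, hlt⟩]
    · have := hvw q hq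
      positivity
  have eq_off_support : ∀ q, v q = 0 → (-v p • w + w p • v) q = -v p * w q := by
    intro q hq
    simp [hq]
  refine ⟨-v p, w p, ha, hb, fun q hq ↦ ?_, ?_⟩
  · have hvq : v q = 0 := by_contra fun h ↦ hq.not_ge (nonneg_on_support q h)
    rw [eq_off_support q hvq] at hq
    exact (pos_iff_neg_of_mul_neg hq).1 ha
  · refine (Set.ssubset_iff_of_subset fun q hq ↦ ?_).2 ⟨p, hb, by simp [mul_comm]⟩
    by_cases hvq : v q = 0
    · rw [Set.mem_ofPred_eq, eq_off_support q hvq] at hq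
      exact (pos_iff_pos_of_mul_pos hq).1 ha
    · exact hvw q hvq

lemma exists_neg_of_linearCombination_eq_zero [Semiring R] [LinearOrder R] {M : Type*}
    [AddCommMonoid M] [PartialOrder M] [IsOrderedCancelAddMonoid M] [Module R M]
    [PosSMulStrictMono R M] {c : σ → M} (hc : ∀ p, 0 < c p) {v : σ →₀ R} (hv : v ≠ 0)
    (h : Finsupp.linearCombination R c v = 0) : ∃ p, v p < 0 := by
  by_contra! hnonneg
  refine (Finset.sum_pos (fun p hp ↦ ?_) (Finsupp.support_nonempty_iff.2 hv)).ne' h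
  exact smul_pos ((hnonneg p).lt_of_ne' (Finsupp.mem_support_iff.1 hp)) (hc p)

end Positivity

section Rank

variable {R : Type*} [Ring R]

lemma rank_le_rank_of_disjoint_of_le_sup {M : Type*} [AddCommGroup M] [Module R M]
    {N P Q : Submodule R M} (hdisj : Disjoint P N) (hle : P ≤ N ⊔ Q) :
    Module.rank R P ≤ Module.rank R Q := by
  have hinj : Function.Injective (N.mkQ.domRestrict P) := by
    rwa [LinearMap.injective_domRestrict_iff, N.ker_mkQ]
  have hmap : P.map N.mkQ ≤ Q.map N.mkQ := by
    simpa only [Submodule.map_sup, N.mkQ_map_self, bot_sup_eq] using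
      Submodule.map_mono (f := N.mkQ) hle
  calc Module.rank R P ≤ Module.rank R (P.map N.mkQ) :=
        (N.mkQ.submoduleMap P).rank_le_of_injective
          fun _ _ hxy ↦ hinj (congrArg Subtype.val hxy)
    _ ≤ Module.rank R (Q.map N.mkQ) := Submodule.rank_mono hmap
    _ ≤ Module.rank R Q := rank_map_le N.mkQ Q

variable [StrongRankCondition R] {σ : Type*}

lemma toENat_rank_supported (S : Set σ) :
    (Module.rank R (Finsupp.supported R R S)).toENat = S.encard := by
  rw [(Finsupp.supportedEquivFinsupp S).rank_eq, rank_finsupp_self, Cardinal.toENat_lift,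
    Set.toENat_cardinalMk]

lemma encard_le_encard_of_disjoint_supported {N : Submodule R (σ →₀ R)} {S T : Set σ}
    (hdisj : Disjoint (Finsupp.supported R R T) N)
    (hle : Finsupp.supported R R T ≤ N ⊔ Finsupp.supported R R S) : T.encard ≤ S.encard := by
  rw [← toENat_rank_supported (R := R) T, ← toENat_rank_supported (R := R) S]
  exact Cardinal.toENat.monotone' (rank_le_rank_of_disjoint_of_le_sup hdisj hle)

end Rank

/-- The group of all chipsplitting outcomes, as a `ℤ`-submodule so that linear algebra applies. -/
noncomputable def outcomes : Submodule ℤ ((ℕ × ℕ) →₀ ℤ) :=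
  AddSubgroup.toIntSubmodule (AddSubgroup.closure (Set.range splitMove))

lemma splitMove_mem_outcomes (p : ℕ × ℕ) : splitMove p ∈ outcomes :=
  AddSubgroup.subset_closure ⟨p, rfl⟩

/-- The total mass of a configuration when a chip at `(i,j)` has mass `2^{-(i+j)}`, the choice for
which splitting a chip preserves mass. -/
noncomputable def mass : ((ℕ × ℕ) →₀ ℤ) →ₗ[ℤ] ℚ :=
  Finsupp.linearCombination ℤ fun p ↦ (1 / 2 : ℚ) ^ (p.1 + p.2)

lemma mass_splitMove (p : ℕ × ℕ) : mass (splitMove p) = 0 := by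
  simp only [mass, splitMove, map_add, map_sub, Finsupp.linearCombination_single, one_smul]
  ring

lemma outcomes_le_ker_mass : outcomes ≤ LinearMap.ker mass := by
  have hrange : Set.range splitMove ⊆ (LinearMap.ker mass).toAddSubgroup :=
    Set.range_subset_iff.2 mass_splitMove
  exact (AddSubgroup.closure_le _).2 hrange

lemma IsOutcome.exists_neg_s19 {v : (ℕ × ℕ) →₀ ℤ} (hv : IsOutcome v) (hv0 : v ≠ 0) : ∃ p, v p < 0 :=
  exists_neg_of_linearCombination_eq_zero (fun _ ↦ by positivity) hv0 (outcomes_le_ker_mass hv)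

lemma exists_smul_add_smul_isValid_setOf_pos_ssubset {w v : (ℕ × ℕ) →₀ ℤ} (hw : IsOutcome w)
    (hwvalid : IsValid w) (hv : IsOutcome v) (hv0 : v ≠ 0) (hvw : ∀ p, v p ≠ 0 → 0 < w p) :
    ∃ a b : ℤ, 0 < a ∧ 0 < b ∧ IsOutcome (a • w + b • v) ∧ IsValid (a • w + b • v) ∧
      {p | 0 < (a • w + b • v) p} ⊂ {p | 0 < w p} := by
  obtain ⟨a, b, ha, hb, hneg, hss⟩ :=
    exists_pos_smul_add_smul_setOf_pos_ssubset (hv.exists_neg_s19 hv0) hvw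
  exact ⟨a, b, ha, hb, add_mem (zsmul_mem hw a) (zsmul_mem hv b),
    fun p hp ↦ hwvalid p (hneg p hp), hss⟩

lemma IsFundamentalOutcome.disjoint_supported_outcomes {w : (ℕ × ℕ) →₀ ℤ}
    (hw : IsFundamentalOutcome w) :
    Disjoint (Finsupp.supported ℤ ℤ {p | 0 < w p}) outcomes := by
  obtain ⟨hout, hvalid, -, hindec⟩ := hw
  rw [Submodule.disjoint_def]
  intro v hvsupp hv
  by_contra hv0
  have hvw : ∀ p, v p ≠ 0 → 0 < w p := fun p hp ↦ hvsupp (Finsupp.mem_support_iff.2 hp)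
  obtain ⟨a, b, ha, hb, hout₁, hvalid₁, hss₁⟩ :=
    exists_smul_add_smul_isValid_setOf_pos_ssubset hout hvalid hv hv0 hvw
  obtain ⟨a', b', ha', hb', hout₂, hvalid₂, hss₂⟩ :=
    exists_smul_add_smul_isValid_setOf_pos_ssubset hout hvalid (neg_mem hv) (neg_ne_zero.2 hv0)
      fun p hp ↦ hvw p (neg_ne_zero.1 hp)
  have hdecomp : b' • (a • w + b • v) + b • (a' • w + b' • -v) = (b' * a + b * a') • w := by
    module
  refine hindec ⟨b' / (b' * a + b * a'), b / (b' * a + b * a'), _, _, by positivity, by positivity,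
    hout₁, hvalid₁, hout₂, hvalid₂, hss₁, hss₂, fun p ↦ ?_⟩
  have hdecomp_p := congrArg (Int.cast : ℤ → ℚ) (DFunLike.congr_fun hdecomp p)
  simp only [Finsupp.add_apply, Finsupp.smul_apply, Finsupp.neg_apply, smul_eq_mul] at hdecomp_p ⊢
  push_cast at hdecomp_p ⊢
  field_simp
  linear_combination -hdecomp_p

lemma single_mem_outcomes_sup_supported_bottom_row {d : ℕ} (i j : ℕ) (hij : i + j ≤ d) :
    Finsupp.single (i, j) 1 ∈
      outcomes ⊔ Finsupp.supported ℤ ℤ ((fun k ↦ (k, 0)) '' Set.Iic d) := by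
  induction j generalizing i with
  | zero => exact Submodule.mem_sup_right (Finsupp.single_mem_supported ℤ 1 ⟨i, hij, rfl⟩)
  | succ j ih =>
    have hsplit : Finsupp.single (i, j + 1) (1 : ℤ) =
        splitMove (i, j) + Finsupp.single (i, j) 1 - Finsupp.single (i + 1, j) 1 := by
      rw [splitMove]
      abel
    rw [hsplit]
    exact sub_mem (add_mem (Submodule.mem_sup_left (splitMove_mem_outcomes _))
      (ih i (by lia))) (ih (i + 1) (by lia))

lemma encard_le_of_disjoint_supported_outcomes {T : Set (ℕ × ℕ)} {d : ℕ}
    (hT : ∀ p ∈ T, p.1 + p.2 ≤ d) (hdisj : Disjoint (Finsupp.supported ℤ ℤ T) outcomes) :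
    T.encard ≤ d + 1 := by
  have hle : Finsupp.supported ℤ ℤ T ≤
      outcomes ⊔ Finsupp.supported ℤ ℤ ((fun k ↦ (k, 0)) '' Set.Iic d) := by
    rw [Finsupp.supported_eq_span_single, Submodule.span_le]
    rintro _ ⟨p, hp, rfl⟩
    exact single_mem_outcomes_sup_supported_bottom_row p.1 p.2 (hT p hp)
  calc T.encard ≤ ((fun k ↦ (k, 0)) '' Set.Iic d : Set (ℕ × ℕ)).encard :=
        encard_le_encard_of_disjoint_supported hdisj hle
    _ ≤ (Set.Iic d).encard := Set.encard_image_le _ _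
    _ = d + 1 := by simp [← Finset.coe_Iic, Set.encard_coe_eq_coe_finsetCard]

theorem stmt_19 (w : (ℕ × ℕ) →₀ ℤ) (d n : ℕ)
    (hfund : IsFundamentalOutcome w)
    (hdegle : ∀ p : ℕ × ℕ, w p ≠ 0 → p.1 + p.2 ≤ d)
    (hdegeq : ∃ p : ℕ × ℕ, w p ≠ 0 ∧ p.1 + p.2 = d)
    (hcard : {p : ℕ × ℕ | 0 < w p}.ncard = n + 1) :
    n ≤ d := by
  have hencard : {p | 0 < w p}.encard ≤ d + 1 :=
    encard_le_of_disjoint_supported_outcomes (fun p hp ↦ hdegle p (ne_of_gt hp))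
      hfund.disjoint_supported_outcomes
  have hfin : {p | 0 < w p}.Finite := Set.finite_of_ncard_pos (by lia)
  rw [← hfin.cast_ncard_eq, hcard] at hencard
  exact Nat.le_of_succ_le_succ (by exact_mod_cast hencard)
end
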